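/- Let n ∈ {4,5}. In ℝ[x_1,…,x_n] set s = x_2 + ⋯ + x_n and define the homogeneous polynomials f_1 = x_1² − (x_2² + ⋯ + x_n² + s²), f_j = −e_j(x_2²,…,x_n²,s²) for 2 ≤ j ≤ n−1, and f_n = x_2·x_3·⋯·x_n·s. Then ω = 1·x_1 + 2·x_2 + ⋯ + n·x_n is a Hard Lefschetz element of A = ℝ[x_1,…,x_n]/(f_1,…,f_n) with socle degree N = n² − n. -/

import Mathlib

/-!
Put `r = n - 1`, `N = n² - n`, `yᵢ = x_{i+1}`, and let `e_j` be the elementary symmetric polynomials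
of `y₁, …, y_r, -s`, so that `e₁ = 0`. Expanding the elementary symmetric polynomials of the squares,
the relations say `x₁² + 2 e₂ = 0`, `e₂² + 2 e₄ = 0`, `e₃² - 2 e₂ e₄ = 0`, `e₄² - 2 e₃ e₅ = 0` and
`e_n = 0` (`rel4`, `rel5`).

*Upper bounds for the dimensions.* By these relations `A` is generated by successively adjoining
`x₁`, `e₃`, `y₁, …, y_r` to `ℝ`, each of which satisfies a monic homogeneous equation over the
previous ones (`tower4`, `tower5`). This bounds `dim A_e` by the coefficients `hilb4 e`, `hilb5 e` of
an explicit product of polynomials, which are symmetric under `e ↦ N - e` and vanish beyond `N`.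

*An integration functional.* Write `x₁ = 2 w` and `z = e₃`. Then `y₁, …, y_r` are roots of the
polynomial `p = t ^ (r - 3) (t⁴ - 2 w² t² - z t - μ w⁴)` with `μ = 2 (r - 3)`, over the ring
`ℝ[w, z]` modulo `w ^ (4 r - 8)` and `z² - 8 (r - 3) w⁶`. The functional `phi` multiplies by the
Vandermonde determinant of the `yᵢ`, replaces each power `yᵢ ^ m` by the `m`-th term of a linear
recurrence sequence with characteristic polynomial `p`, and extracts the coefficient of
`w ^ (4 r - 9) z`. It vanishes on the ideal of relations (`phi_eq_zero4`, `phi_eq_zero5`): the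
product of the Vandermonde determinant with each coefficient of `p(t) - ∏ (t - yᵢ) (t + s)` lies in
the ideal generated by the `p(yᵢ)`, by Cramer's rule (`coeff_mem_killI`).

*The Lefschetz property.* Take test monomials `y ^ β` and the classes `ω ^ (d - |β|) y ^ β` in `A_d`.
If the matrix of the numbers `φ(ω ^ (N - |β| - |β'|) y ^ (β + β'))` is invertible, with `β, β'`
running through `hilb d` test monomials of degree at most `d`, then the images of these classes
under `ω ^ (N - 2 d)` are independent in `A_{N - d}`. Together with the upper bounds this makes
multiplication by `ω ^ (N - 2 d)` bijective (`lefschetz_of_gram`). The entries of the matrix do not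
involve `d`, so the matrices for all `d` are leading principal blocks of a single one.

*The computation.* The entries are integers, and each is a factorial times the coefficient of a
`r × r` determinant of one-variable exponential sums (`moment_eq`). They are evaluated modulo `103`
in the ring `𝔽₁₀₃[w, z] / (w⁸, z² - κ w⁶)`, and Gaussian elimination without pivoting shows that
all leading principal blocks are invertible modulo `103` (`check4`, `check5`), hence over `ℝ`
(`gram4`, `gram5`).
-/

open MvPolynomial Finset

noncomputable section

/-- The `j`-th elementary symmetric polynomial of the listed arguments `v 0, …, v (m-1)`. -/
def esymmOf {R : Type*} [CommRing R] {m : ℕ} (j : ℕ) (v : Fin m → R) : R :=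
  ∑ s ∈ Finset.powersetCard j (Finset.univ : Finset (Fin m)), ∏ i ∈ s, v i

/-- The degree-`e` graded piece of `ℝ[x_1,…,x_r]/I`: the image in the quotient of the
homogeneous polynomials of degree `e`. -/
def gradedPiece {r : ℕ} (I : Ideal (MvPolynomial (Fin r) ℝ)) (e : ℕ) :
    Submodule ℝ (MvPolynomial (Fin r) ℝ ⧸ I) :=
  (homogeneousSubmodule (Fin r) ℝ e).map (Ideal.Quotient.mkₐ ℝ I).toLinearMap

/-- `ω` is a Hard Lefschetz element of `ℝ[x_1,…,x_r]/I` with socle degree `N`: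
all graded pieces above degree `N` vanish, and for `0 ≤ 2d ≤ N` multiplication by
`ω^(N-2d)` is a bijective linear map from the degree-`d` piece onto the degree-`(N-d)` piece. -/
def IsHardLefschetzElement {r : ℕ} (I : Ideal (MvPolynomial (Fin r) ℝ))
    (ω : MvPolynomial (Fin r) ℝ ⧸ I) (N : ℕ) : Prop :=
  (∀ e, N < e → gradedPiece I e = ⊥) ∧
  ∀ d : ℕ, 2 * d ≤ N →
    (gradedPiece I d).map (LinearMap.mulLeft ℝ (ω ^ (N - 2 * d))) = gradedPiece I (N - d) ∧
    ∀ x ∈ gradedPiece I d, ω ^ (N - 2 * d) * x = 0 → x = 0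

/-- `s = x_2 + ⋯ + x_n` (variables are `X 0, …, X (n-1)` with `x_i = X (i-1)`). -/
def sSum (n : ℕ) : MvPolynomial (Fin n) ℝ :=
  ∑ i ∈ Finset.univ.filter (fun i : Fin n => i.val ≠ 0), X i

/-- The vector of arguments `(x_2², …, x_n², s²)`. -/
def argsA (n : ℕ) : Fin n → MvPolynomial (Fin n) ℝ := fun i =>
  if h : i.val + 1 < n then (X (⟨i.val + 1, h⟩ : Fin n)) ^ 2 else (sSum n) ^ 2

/-- The relations: `f_1 = x_1² − (x_2² + ⋯ + x_n² + s²)`,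
`f_j = −e_j(x_2²,…,x_n²,s²)` for `2 ≤ j ≤ n−1`, and `f_n = x_2·x_3·⋯·x_n·s`. -/
def rel2 (n : ℕ) : Fin n → MvPolynomial (Fin n) ℝ := fun j =>
  if j.val = 0 then (X (⟨0, j.pos⟩ : Fin n)) ^ 2 - esymmOf 1 (argsA n)
  else if j.val + 1 = n then
    (∏ i ∈ Finset.univ.filter (fun i : Fin n => i.val ≠ 0), X i) * sSum n
  else - esymmOf (j.val + 1) (argsA n)

/-- `ω = 1·x_1 + 2·x_2 + ⋯ + n·x_n`. -/
def omegaPoly (n : ℕ) : MvPolynomial (Fin n) ℝ :=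
  ∑ i : Fin n, C ((i.val : ℝ) + 1) * X i

/-! ### Packed digits and Kronecker substitution -/

namespace SpinLef

/-- `force n k` is `k n`; the recursor makes the kernel evaluate `n` to a literal first. -/
def force {α : Type} (n : ℕ) (k : ℕ → α) : α := Nat.rec (k 0) (fun m _ => k (Nat.succ m)) n

@[simp] theorem force_eq {α : Type} (n : ℕ) (k : ℕ → α) : force n k = k n := by
  cases n <;> rfl

/-- The number with base-`2^w` digits `f 0, …, f (n-1)`. -/
def pk (w n : ℕ) (f : ℕ → ℕ) : ℕ := Nat.rec 0 (fun i ih => ih + f i * 2 ^ (w * i)) n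

/-- The `i`-th digit of `N` in base `2^w`. -/
def dig (w N i : ℕ) : ℕ := N / 2 ^ (w * i) % 2 ^ w

theorem pk_eq (w n : ℕ) (f : ℕ → ℕ) : pk w n f = ∑ i ∈ range n, f i * 2 ^ (w * i) := by
  induction n with
  | zero => rfl
  | succ n ih => rw [Finset.sum_range_succ, ← ih]; rfl

theorem sum_lt (w n : ℕ) (f : ℕ → ℕ) (hf : ∀ i < n, f i < 2 ^ w) :
    ∑ i ∈ range n, f i * 2 ^ (w * i) < 2 ^ (w * n) := by
  induction n with
  | zero => simp
  | succ n ih =>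
    rw [Finset.sum_range_succ, mul_add, mul_one, pow_add]
    have h1 := ih fun i hi => hf i (by omega)
    have h2 : f n + 1 ≤ 2 ^ w := hf n (by omega)
    nlinarith [Nat.mul_le_mul_right (2 ^ (w * n)) h2]

theorem dig_sum (w n : ℕ) (f : ℕ → ℕ) (hf : ∀ i < n, f i < 2 ^ w) (j : ℕ) (hj : j < n) :
    dig w (∑ i ∈ range n, f i * 2 ^ (w * i)) j = f j := by
  obtain ⟨k, rfl⟩ : ∃ k, n = j + (1 + k) := ⟨n - j - 1, by omega⟩
  have h1 := sum_lt w j f fun i hi => hf i (by omega)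
  have h2 : ∑ i ∈ range (j + (1 + k)), f i * 2 ^ (w * i) = (∑ i ∈ range j, f i * 2 ^ (w * i)) +
      2 ^ (w * j) * (f j + 2 ^ w * ∑ i ∈ range k, f (j + (1 + i)) * 2 ^ (w * i)) := by
    rw [Finset.sum_range_add, Finset.sum_range_add]
    simp only [Finset.sum_range_one, Finset.mul_sum, mul_add, add_zero]
    congr 2
    · rw [mul_zero, add_zero, mul_comm]
    · exact Finset.sum_congr rfl fun i _ => by
        rw [mul_one, pow_add, pow_add]; ring
  rw [dig, h2, Nat.add_mul_div_left _ _ (by positivity), Nat.div_eq_of_lt h1, zero_add,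
    Nat.add_mul_mod_self_left, Nat.mod_eq_of_lt (hf j hj)]

theorem dig_eq_zero (w N i j : ℕ) (h : N % 2 ^ (w * i) = 0) (hj : j < i) : dig w N j = 0 := by
  obtain ⟨k, rfl⟩ : ∃ k, i = j + (1 + k) := ⟨i - j - 1, by omega⟩
  obtain ⟨c, rfl⟩ := Nat.dvd_of_mod_eq_zero h
  have : 2 ^ (w * (j + (1 + k))) * c = 2 ^ (w * j) * (2 ^ w * (2 ^ (w * k) * c)) := by
    rw [mul_add, mul_add, mul_one, pow_add, pow_add]; ring
  rw [dig, this, Nat.mul_div_cancel_left _ (by positivity), Nat.mul_mod_right]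

/-- The number with base-`2^w` digits the entries of the list. -/
def packL (w : ℕ) (L : List ℕ) : ℕ := List.rec 0 (fun a _ ih => a + 2 ^ w * ih) L

theorem packL_eq (w : ℕ) (L : List ℕ) :
    packL w L = ∑ i ∈ range L.length, L.getD i 0 * 2 ^ (w * i) := by
  induction L with
  | nil => rfl
  | cons a L ih =>
    rw [List.length_cons, Finset.sum_range_succ']
    change a + 2 ^ w * packL w L = _
    rw [ih, Finset.mul_sum, add_comm]
    congr 1
    · exact Finset.sum_congr rfl fun i _ => by
        rw [List.getD_cons_succ, mul_add, mul_one, pow_add]; ring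
    · simp

theorem dig_packL (w : ℕ) (L : List ℕ) (hL : ∀ a ∈ L, a < 2 ^ w) (j : ℕ) (hj : j < L.length) :
    dig w (packL w L) j = L.getD j 0 := by
  rw [packL_eq]
  refine dig_sum w _ (fun i => L.getD i 0) (fun i hi => ?_) j hj
  rw [List.getD_eq_getElem _ _ hi]
  exact hL _ (List.getElem_mem hi)

theorem packL_lt (w : ℕ) (L : List ℕ) (hL : ∀ a ∈ L, a < 2 ^ w) :
    packL w L < 2 ^ (w * L.length) := by
  rw [packL_eq]
  refine sum_lt w _ (fun i => L.getD i 0) (fun i hi => ?_)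
  rw [List.getD_eq_getElem _ _ hi]
  exact hL _ (List.getElem_mem hi)

/-- The number with base-`2^24` digits the entries of the list in reverse order. -/
def packR (L : List ℕ) : ℕ := List.rec 0 (fun a l ih => a * 2 ^ (24 * l.length) + ih) L

/-- The dot product of two lists. -/
def dot : List ℕ → List ℕ → ℕ
  | a :: u, b :: v => a * b + dot u v
  | _, _ => 0

theorem dot_append (u u' v v' : List ℕ) (h : u.length = v.length) :
    dot (u ++ u') (v ++ v') = dot u v + dot u' v' := by
  induction u generalizing v with
  | nil => cases v with
    | nil => simp [dot]
    | cons _ _ => simp at h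
  | cons a u ih => cases v with
    | nil => simp at h
    | cons b v =>
      simp only [List.cons_append, dot, ih v (by simpa using h), add_assoc]

theorem dot_le (u v : List ℕ) (h : u.length = v.length) (hu : ∀ a ∈ u, a < 103)
    (hv : ∀ a ∈ v, a < 103) : dot u v ≤ u.length * 102 ^ 2 := by
  induction u generalizing v with
  | nil => cases v <;> simp [dot]
  | cons a u ih => cases v with
    | nil => simp at h
    | cons b v =>
      simp only [List.mem_cons, forall_eq_or_imp] at hu hv
      have := ih v (by simpa using h) hu.2 hv.2
      have h2 : a * b ≤ 102 * 102 := Nat.mul_le_mul (by omega) (by omega)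
      simp only [dot, List.length_cons]
      omega

theorem packR_le (v : List ℕ) (hv : ∀ a ∈ v, a < 103) :
    packR v * (2 ^ 24 - 1) + 102 ≤ 102 * 2 ^ (24 * v.length) := by
  induction v with
  | nil => simp [packR]
  | cons a v ih =>
    simp only [List.mem_cons, forall_eq_or_imp] at hv
    have h1 := ih hv.2
    change (a * 2 ^ (24 * v.length) + packR v) * (2 ^ 24 - 1) + 102 ≤ 102 * 2 ^ (24 * (v.length + 1))
    rw [mul_add 24, pow_add]
    generalize 2 ^ (24 * v.length) = q at *
    have h2 : a * q ≤ 102 * q := Nat.mul_le_mul_right _ (by omega)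
    norm_num at h1 ⊢
    linarith

/-- Kronecker substitution: multiply a list packed in order with a list packed in reverse order.
The middle digit of the product is the dot product, and the digits below do not carry into it. -/
theorem pack_mul (u v : List ℕ) (h : u.length = v.length)
    (hu : ∀ a ∈ u, a < 103) (hv : ∀ a ∈ v, a < 103) :
    ∃ lo hi, 2 ^ 24 * (packL 24 u * packR v) =
      lo + 2 ^ (24 * u.length) * (dot u v + 2 ^ 24 * hi) ∧
      lo * (2 ^ 24 - 1) + u.length * 102 ^ 2 * 2 ^ 24 ≤
        u.length * 102 ^ 2 * 2 ^ (24 * u.length) := by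
  induction u generalizing v with
  | nil => cases v with
    | nil => exact ⟨0, 0, by simp [packL, packR, dot]⟩
    | cons _ _ => simp at h
  | cons a u ih => cases v with
    | nil => simp at h
    | cons c v =>
      simp only [List.mem_cons, forall_eq_or_imp] at hu hv
      have hlen : u.length = v.length := by simpa using h
      obtain ⟨lo, hi, h1, h2⟩ := ih v hlen hu.2 hv.2
      have h3 := packR_le v hv.2
      have e1 : packL 24 (a :: u) = a + 2 ^ 24 * packL 24 u := rfl
      have e2 : packR (c :: v) = c * 2 ^ (24 * v.length) + packR v := rfl
      refine ⟨2 ^ 24 * (a * packR v) + 2 ^ 24 * lo, c * packL 24 u + hi, ?_, ?_⟩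
      · rw [e1, e2, List.length_cons, mul_add 24, pow_add, dot, ← hlen]
        linear_combination 2 ^ 24 * h1
      · rw [List.length_cons, mul_add 24, pow_add]
        rw [← hlen] at h3
        generalize 2 ^ (24 * u.length) = q at *
        generalize u.length = n at *
        have h4 : a * packR v ≤ 102 * packR v := Nat.mul_le_mul_right _ (by omega)
        norm_num at h2 h3 h4 ⊢
        nlinarith

theorem dig_pack_mul (u v : List ℕ) (h : u.length = 48) (h' : v.length = 48)
    (hu : ∀ a ∈ u, a < 103) (hv : ∀ a ∈ v, a < 103) :
    dig 24 (packL 24 u * packR v) 47 = dot u v := by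
  obtain ⟨lo, hi, h1, h2⟩ := pack_mul u v (h.trans h'.symm) hu hv
  have h3 := dot_le u v (h.trans h'.symm) hu hv
  rw [h] at h1 h2 h3
  have h4 : packL 24 u * packR v / 2 ^ (24 * 47) = dot u v + 2 ^ 24 * hi := by
    have h5 : lo < 2 ^ (24 * 48) := by
      norm_num at h2 ⊢
      omega
    rw [← Nat.mul_div_mul_left _ _ (show 0 < 2 ^ 24 by norm_num), h1, ← pow_add,
      show 24 + 24 * 47 = 24 * 48 from rfl, Nat.add_mul_div_left _ _ (by positivity),
      Nat.div_eq_of_lt h5, zero_add]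
  rw [dig, h4, Nat.add_mul_mod_self_left, Nat.mod_eq_of_lt]
  norm_num at h3 ⊢
  omega

end SpinLef

/-! ### Gaussian elimination modulo 103 on packed rows -/

namespace SpinLef

/-- The packed row `(ent (b + c))_c`, `c` running through the list `B`. -/
def rowOf (ent : ℕ → ℕ) (B : List ℕ) (b : ℕ) : ℕ :=
  List.rec 0 (fun c _ ih => ent (b + c) + 2 ^ 24 * ih) B

/-- Adds multiples of the rows `(k, R)` to the packed row `acc`, so as to clear its `k`-th digits
modulo `103`. The digits themselves are not reduced. -/
def elim (rows : List (ℕ × ℕ)) (acc : ℕ) : ℕ :=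
  List.rec acc (fun R _ ih => force ih fun a => a + (103 - dig 24 a R.1 % 103) * R.2) rows

/-- Scales a packed row so that its `i`-th digit becomes `1` modulo `103`, and reduces all digits. -/
def norm (h i acc : ℕ) : ℕ :=
  force ((dig 24 acc i % 103) ^ 101 % 103) fun inv =>
    pk 24 h (fun j => dig 24 acc j * inv % 103)

/-- The packed row `R` starts with `i` zeros followed by a `1`. -/
def okRow (i R : ℕ) : Bool := (dig 24 R i).beq 1 && (R % 2 ^ (24 * i)).beq 0

/-- Gaussian elimination modulo `103`, without pivoting, of the matrix `ent (b + c)`, `b` and `c`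
in `B`; it checks that the `i`-th reduced row has its first nonzero entry in column `i`. -/
def run (ent : ℕ → ℕ) (h : ℕ) (B : List ℕ) (todo : List ℕ) : ℕ → List (ℕ × ℕ) → Bool :=
  List.rec (fun _ _ => true) (fun b _ ih i rows =>
    force (norm h i (elim rows (rowOf ent B b))) fun R =>
      okRow i R && force (Nat.succ i) fun i' => ih i' ((i, R) :: rows)) todo

theorem rowOf_eq (ent : ℕ → ℕ) (B : List ℕ) (b : ℕ) :
    rowOf ent B b = packL 24 (B.map fun c => ent (b + c)) := by
  induction B with
  | nil => rfl
  | cons c B ih =>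
    change ent (b + c) + 2 ^ 24 * rowOf ent B b = _
    rw [ih]; rfl

/-- The packed row `R`, of length `B.length`, has digits `f` below `103` that start with `i` zeros
followed by a `1`, and the row of residues `f` annihilates every vector which is annihilated by
the rows `0, …, i` of the matrix `ent (b + c)`. -/
def Good (ent : ℕ → ℕ) (B : List ℕ) (i R : ℕ) : Prop :=
  ∃ f : ℕ → ℕ, (∀ j, f j < 103) ∧ R = ∑ j ∈ range B.length, f j * 2 ^ (24 * j) ∧ f i = 1 ∧
    (∀ j < i, f j = 0) ∧ ∀ x : ℕ → ZMod 103,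
      (∀ k ≤ i, ∑ j ∈ range B.length, (ent (B.getD k 0 + B.getD j 0) : ZMod 103) * x j = 0) →
      ∑ j ∈ range B.length, (f j : ZMod 103) * x j = 0

/-- Elimination does not change the value of a row on vectors annihilated by the earlier rows. The
bound on the digits excludes carries. -/
theorem elim_sound (ent : ℕ → ℕ) (B : List ℕ) (i : ℕ) (f : ℕ → ℕ) (hf : ∀ j, f j < 103)
    (rows : List (ℕ × ℕ)) (hrows : ∀ R ∈ rows, R.1 < i ∧ Good ent B R.1 R.2) :
    ∃ g : ℕ → ℕ, (∀ j, g j ≤ 103 + 103 ^ 2 * rows.length) ∧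
      elim rows (∑ j ∈ range B.length, f j * 2 ^ (24 * j)) =
        ∑ j ∈ range B.length, g j * 2 ^ (24 * j) ∧
      ∀ x : ℕ → ZMod 103,
        (∀ k < i, ∑ j ∈ range B.length, (ent (B.getD k 0 + B.getD j 0) : ZMod 103) * x j = 0) →
        ∑ j ∈ range B.length, (g j : ZMod 103) * x j =
          ∑ j ∈ range B.length, (f j : ZMod 103) * x j := by
  induction rows with
  | nil => exact ⟨f, fun j => (hf j).le, rfl, fun x _ => rfl⟩
  | cons R rows ih =>
    simp only [List.mem_cons, forall_eq_or_imp] at hrows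
    obtain ⟨g, hg, h1, h2⟩ := ih hrows.2
    obtain ⟨hR, r, hr, h3, -, -, h4⟩ := hrows.1
    have e : elim (R :: rows) (∑ j ∈ range B.length, f j * 2 ^ (24 * j)) =
        force (elim rows (∑ j ∈ range B.length, f j * 2 ^ (24 * j)))
          fun a => a + (103 - dig 24 a R.1 % 103) * R.2 := rfl
    rw [e, force_eq, h1]
    generalize hm : 103 - dig 24 (∑ j ∈ range B.length, g j * 2 ^ (24 * j)) R.1 % 103 = m
    refine ⟨fun j => g j + m * r j, fun j => ?_, ?_, fun x hx => ?_⟩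
    · have h5 : m * r j ≤ 103 * 103 := Nat.mul_le_mul (by omega) (hr j).le
      have := hg j
      simp only [List.length_cons]
      omega
    · rw [h3, Finset.mul_sum, ← Finset.sum_add_distrib]
      exact Finset.sum_congr rfl fun j _ => by ring
    · have h6 := h4 x fun k hk => hx k (by omega)
      simp only [Nat.cast_add, Nat.cast_mul, add_mul, Finset.sum_add_distrib, h2 x hx, mul_assoc,
        ← Finset.mul_sum, h6, mul_zero, add_zero]

/-- A successful elimination produces a good row for every index that has not been treated yet. -/
theorem run_sound (ent : ℕ → ℕ) (hent : ∀ c, ent c < 103) (B : List ℕ) (hB : B.length < 1000)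
    (todo : List ℕ) (i : ℕ) (done : List ℕ) (hdone : done.length = i) (hB' : B = done ++ todo)
    (rows : List (ℕ × ℕ)) (hrows : ∀ R ∈ rows, R.1 < i ∧ Good ent B R.1 R.2)
    (hlen : rows.length ≤ i) (h : run ent B.length B todo i rows = true) (k : ℕ) (hk : i ≤ k)
    (hk' : k < B.length) : ∃ R, Good ent B k R := by
  induction todo generalizing i done rows with
  | nil => simp [hB'] at hk'; omega
  | cons b todo ih =>
    have e : run ent B.length B (b :: todo) i rows =
      force (norm B.length i (elim rows (rowOf ent B b))) fun R =>
        okRow i R && force (Nat.succ i) fun i' => run ent B.length B todo i' ((i, R) :: rows) := rfl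
    rw [e, force_eq, force_eq, Bool.and_eq_true] at h
    obtain ⟨h1, h2⟩ := h
    have hi : i < B.length := by rw [hB']; simp [hdone]
    have hb : B.getD i 0 = b := by rw [hB']; simp [← hdone]
    obtain ⟨g, hg, h3, h4⟩ := elim_sound ent B i (fun j => ent (b + B.getD j 0))
      (fun j => hent _) rows hrows
    have h5 : rowOf ent B b = ∑ j ∈ range B.length, ent (b + B.getD j 0) * 2 ^ (24 * j) := by
      rw [rowOf_eq, packL_eq, List.length_map]
      refine Finset.sum_congr rfl fun j hj => ?_
      have hj := Finset.mem_range.1 hj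
      rw [List.getD_eq_getElem _ _ (by simpa using hj), List.getElem_map,
        List.getD_eq_getElem _ _ hj]
    have h6 : ∀ j < B.length, dig 24 (elim rows (rowOf ent B b)) j = g j := fun j hj => by
      rw [h5, h3]
      refine dig_sum 24 _ _ (fun j _ => lt_of_le_of_lt (hg j) ?_) j hj
      have : rows.length < 1000 := by omega
      norm_num
      omega
    have hgood : Good ent B i (norm B.length i (elim rows (rowOf ent B b))) := by
      rw [okRow, Bool.and_eq_true, Nat.beq_eq, Nat.beq_eq] at h1
      generalize hR : norm B.length i (elim rows (rowOf ent B b)) = R at h1 ⊢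
      rw [norm, force_eq, pk_eq] at hR
      generalize (dig 24 (elim rows (rowOf ent B b)) i % 103) ^ 101 % 103 = inv at hR
      have hR' : R = ∑ j ∈ range B.length, (g j * inv % 103) * 2 ^ (24 * j) := by
        rw [← hR]
        exact Finset.sum_congr rfl fun j hj => by rw [h6 j (Finset.mem_range.1 hj)]
      have h7 : ∀ j < B.length, dig 24 R j = g j * inv % 103 := fun j hj => by
        rw [hR']
        exact dig_sum 24 _ (fun j => g j * inv % 103)
          (fun j _ => (Nat.mod_lt _ (by norm_num)).trans (by norm_num)) j hj
      refine ⟨fun j => g j * inv % 103, fun j => Nat.mod_lt _ (by norm_num), hR', ?_, ?_, ?_⟩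
      · exact (h7 i hi).symm.trans h1.1
      · exact fun j hj => (h7 j (by omega)).symm.trans (dig_eq_zero _ _ _ _ h1.2 hj)
      · intro x hx
        have h8 := h4 x fun k hk => hx k hk.le
        have h9 := hx i le_rfl
        rw [hb] at h9
        rw [h9] at h8
        simp only [ZMod.natCast_mod, Nat.cast_mul]
        rw [← zero_mul (inv : ZMod 103), ← h8, Finset.sum_mul]
        exact Finset.sum_congr rfl fun j _ => by ring
    rcases hk.eq_or_lt with rfl | hk
    · exact ⟨_, hgood⟩
    · refine ih (i + 1) (done ++ [b]) (by simp [hdone]) (by simp [hB']) ((i, _) :: rows) ?_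
        (by simp; omega) h2 hk
      simp only [List.mem_cons, forall_eq_or_imp]
      exact ⟨⟨by simp, hgood⟩, fun R hR => ⟨(hrows R hR).1.trans (by omega), (hrows R hR).2⟩⟩

/-- If the elimination succeeds then all leading principal blocks of the matrix `ent (b + c)` are
nonsingular modulo `103`. -/
theorem run_nondeg (ent : ℕ → ℕ) (hent : ∀ c, ent c < 103) (B : List ℕ) (hB : B.length < 1000)
    (h : run ent B.length B B 0 [] = true) (m : ℕ) (hm : m ≤ B.length) (x : ℕ → ZMod 103)
    (hx : ∀ i < m, ∑ j ∈ range m, (ent (B.getD i 0 + B.getD j 0) : ZMod 103) * x j = 0) :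
    ∀ i < m, x i = 0 := by
  have key := run_sound ent hent B hB B 0 [] rfl rfl [] (by simp) le_rfl h
  set y : ℕ → ZMod 103 := fun j => if j < m then x j else 0 with hy
  have hsum : ∀ c : ℕ → ZMod 103, ∑ j ∈ range B.length, c j * y j = ∑ j ∈ range m, c j * x j := by
    intro c
    rw [← Finset.sum_subset (Finset.range_mono hm)]
    · exact Finset.sum_congr rfl fun j hj => by simp [hy, Finset.mem_range.1 hj]
    · intro j _ hj
      simp only [Finset.mem_range] at hj
      simp [hy, hj]
  by_contra! hcon
  obtain ⟨i₀, hi₀, hx₀⟩ := hcon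
  -- The last nonzero coordinate of the vector contradicts the shape of the reduced row.
  obtain ⟨i, hi, hmax⟩ := ((range m).filter fun i => x i ≠ 0).exists_max_image id
    ⟨i₀, by simp [hi₀, hx₀]⟩
  simp only [Finset.mem_filter, Finset.mem_range, id] at hi hmax
  obtain ⟨R, f, -, -, h1, h2, h3⟩ := key i (by omega) (by omega)
  have h4 := h3 y fun k hk => by rw [hsum]; exact hx k (by omega)
  rw [hsum, Finset.sum_eq_single i, h1, Nat.cast_one, one_mul] at h4
  · exact hi.2 h4
  · intro j hj hji
    rcases hji.lt_or_gt with hlt | hlt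
    · rw [h2 j hlt, Nat.cast_zero, zero_mul]
    · rw [not_not.1 fun hne => absurd (hmax j ⟨Finset.mem_range.1 hj, hne⟩) (by omega), mul_zero]
  · exact fun hi' => absurd (Finset.mem_range.2 hi.1) hi'

end SpinLef

/-! ### Arithmetic in the coefficient ring modulo 103 -/

namespace SpinLef

/-- Eight residues modulo `103`, standing for
`a₀ + a₁w² + a₂w⁴ + a₃w⁶ + z(a₄ + a₅w² + a₆w⁴ + a₇w⁶)`. -/
structure C8 where
  (a0 a1 a2 a3 a4 a5 a6 a7 : ℕ)

namespace C8

/-- The zero element. -/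
def zero : C8 := ⟨0, 0, 0, 0, 0, 0, 0, 0⟩

/-- Evaluates all components before passing on the element. -/
def force {α : Type} (x : C8) (k : C8 → α) : α :=
  C8.rec (fun a0 a1 a2 a3 a4 a5 a6 a7 =>
    SpinLef.force a0 fun a0 => SpinLef.force a1 fun a1 =>
    SpinLef.force a2 fun a2 => SpinLef.force a3 fun a3 =>
    SpinLef.force a4 fun a4 => SpinLef.force a5 fun a5 =>
    SpinLef.force a6 fun a6 => SpinLef.force a7 fun a7 => k ⟨a0, a1, a2, a3, a4, a5, a6, a7⟩) x

@[simp] theorem force_eq {α : Type} (x : C8) (k : C8 → α) : x.force k = k x := by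
  cases x; simp [force]

/-- `x * y - u * v` in the ring given by `w ^ 8 = 0` and `z ^ 2 = κ * w ^ 6`. -/
def minor (κ : ℕ) (x y u v : C8) : C8 :=
  C8.rec (fun a0 a1 a2 a3 a4 a5 a6 a7 => C8.rec (fun b0 b1 b2 b3 b4 b5 b6 b7 =>
  C8.rec (fun c0 c1 c2 c3 c4 c5 c6 c7 => C8.rec (fun d0 d1 d2 d3 d4 d5 d6 d7 =>
   ⟨(a0*b0 + 102*(c0*d0)) % 103,
    (a0*b1+a1*b0 + 102*(c0*d1+c1*d0)) % 103,
    (a0*b2+a1*b1+a2*b0 + 102*(c0*d2+c1*d1+c2*d0)) % 103,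
    (a0*b3+a1*b2+a2*b1+a3*b0 + κ*(a4*b4) +
      102*(c0*d3+c1*d2+c2*d1+c3*d0+κ*(c4*d4))) % 103,
    (a0*b4+a4*b0 + 102*(c0*d4+c4*d0)) % 103,
    (a0*b5+a1*b4+a4*b1+a5*b0 + 102*(c0*d5+c1*d4+c4*d1+c5*d0)) % 103,
    (a0*b6+a1*b5+a2*b4+a4*b2+a5*b1+a6*b0 +
      102*(c0*d6+c1*d5+c2*d4+c4*d2+c5*d1+c6*d0)) % 103,
    (a0*b7+a1*b6+a2*b5+a3*b4+a4*b3+a5*b2+a6*b1+a7*b0 +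
      102*(c0*d7+c1*d6+c2*d5+c3*d4+c4*d3+c5*d2+c6*d1+c7*d0)) % 103⟩) v) u) y) x

/-- `2 * w ^ 2 * c + z * b + μ * w ^ 4 * a`. -/
def step (κ μ : ℕ) (a b c : C8) : C8 :=
  ⟨0, (2 * c.a0) % 103, (2 * c.a1 + μ * a.a0) % 103, (2 * c.a2 + κ * b.a4 + μ * a.a1) % 103,
    b.a0, (2 * c.a4 + b.a1) % 103, (2 * c.a5 + b.a2 + μ * a.a4) % 103,
    (2 * c.a6 + b.a3 + μ * a.a5) % 103⟩

/-- `m * x + y`. -/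
def axpy (m : ℕ) (x y : C8) : C8 :=
  ⟨(m * x.a0 + y.a0) % 103, (m * x.a1 + y.a1) % 103, (m * x.a2 + y.a2) % 103,
    (m * x.a3 + y.a3) % 103, (m * x.a4 + y.a4) % 103, (m * x.a5 + y.a5) % 103,
    (m * x.a6 + y.a6) % 103, (m * x.a7 + y.a7) % 103⟩

/-- The list of the components. -/
def toL (x : C8) : List ℕ :=
  C8.rec (fun a0 a1 a2 a3 a4 a5 a6 a7 => [a0, a1, a2, a3, a4, a5, a6, a7]) x

/-- The coefficients of the linear form `y ↦ ℓ (y * x)`, where the linear form `ℓ` takes the value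
`wₖ` at `z * w ^ (2 * k)` and vanishes at the powers of `w ^ 2`. -/
def dual (w0 w1 w2 w3 : ℕ) (x : C8) : List ℕ :=
  C8.rec (fun a0 a1 a2 a3 a4 a5 a6 a7 =>
   [(a4*w0+a5*w1+a6*w2+a7*w3) % 103, (a4*w1+a5*w2+a6*w3) % 103, (a4*w2+a5*w3) % 103,
    (a4*w3) % 103, (a0*w0+a1*w1+a2*w2+a3*w3) % 103, (a0*w1+a1*w2+a2*w3) % 103,
    (a0*w2+a1*w3) % 103, (a0*w3) % 103]) x

/-- All components are reduced modulo `103`. -/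
def Red (x : C8) : Prop := ∀ a ∈ x.toL, a < 103

/-- The element of a ring with elements `w` and `z` described by the eight components. -/
def val {Q : Type*} [CommRing Q] (w z : Q) (x : C8) : Q :=
  x.a0 + x.a1 * w ^ 2 + x.a2 * w ^ 4 + x.a3 * w ^ 6 +
    z * (x.a4 + x.a5 * w ^ 2 + x.a6 * w ^ 4 + x.a7 * w ^ 6)

section val

variable {Q : Type*} [CommRing Q] {w z : Q}

theorem cast_mod (hQ : (103 : Q) = 0) (n : ℕ) : ((n % 103 : ℕ) : Q) = n := by
  conv_rhs => rw [← Nat.mod_add_div n 103]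
  push_cast
  rw [hQ, zero_mul, add_zero]

theorem val_minor (hQ : (103 : Q) = 0) (κ : ℕ) (hw : w ^ 8 = 0) (hz : z ^ 2 = κ * w ^ 6)
    (x y u v : C8) :
    (minor κ x y u v).val w z = x.val w z * y.val w z - u.val w z * v.val w z := by
  obtain ⟨a0, a1, a2, a3, a4, a5, a6, a7⟩ := x
  obtain ⟨b0, b1, b2, b3, b4, b5, b6, b7⟩ := y
  obtain ⟨c0, c1, c2, c3, c4, c5, c6, c7⟩ := u
  obtain ⟨d0, d1, d2, d3, d4, d5, d6, d7⟩ := v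
  simp only [minor, val, cast_mod hQ]
  push_cast
  have h102 : (102 : Q) = -1 := by linear_combination hQ
  have hw10 : w ^ 10 = 0 := by linear_combination w ^ 2 * hw
  have hw12 : w ^ 12 = 0 := by linear_combination w ^ 4 * hw
  simp only [h102]
  have key : ∀ a0 a1 a2 a3 a4 a5 a6 a7 b0 b1 b2 b3 b4 b5 b6 b7 : Q,
      (a0 + a1 * w ^ 2 + a2 * w ^ 4 + a3 * w ^ 6 +
        z * (a4 + a5 * w ^ 2 + a6 * w ^ 4 + a7 * w ^ 6)) *
      (b0 + b1 * w ^ 2 + b2 * w ^ 4 + b3 * w ^ 6 +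
        z * (b4 + b5 * w ^ 2 + b6 * w ^ 4 + b7 * w ^ 6)) =
      a0*b0 + (a0*b1+a1*b0) * w ^ 2 + (a0*b2+a1*b1+a2*b0) * w ^ 4 +
      (a0*b3+a1*b2+a2*b1+a3*b0 + κ*(a4*b4)) * w ^ 6 + z * ((a0*b4+a4*b0) +
      (a0*b5+a1*b4+a4*b1+a5*b0) * w ^ 2 + (a0*b6+a1*b5+a2*b4+a4*b2+a5*b1+a6*b0) * w ^ 4 +
      (a0*b7+a1*b6+a2*b5+a3*b4+a4*b3+a5*b2+a6*b1+a7*b0) * w ^ 6) := by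
    intro a0 a1 a2 a3 a4 a5 a6 a7 b0 b1 b2 b3 b4 b5 b6 b7
    linear_combination
      ((a1*b3+a2*b2+a3*b1) + (a2*b3+a3*b2) * w ^ 2 + a3*b3 * w ^ 4 +
        z * ((a1*b7+a2*b6+a3*b5+a5*b3+a6*b2+a7*b1) + (a2*b7+a3*b6+a6*b3+a7*b2) * w ^ 2 +
          (a3*b7+a7*b3) * w ^ 4) +
        κ * ((a4*b5+a5*b4) + (a4*b6+a5*b5+a6*b4) * w ^ 2 + (a4*b7+a5*b6+a6*b5+a7*b4) * w ^ 4 +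
          (a5*b7+a6*b6+a7*b5) * w ^ 6 + (a6*b7+a7*b6) * w ^ 8 + a7*b7 * w ^ 10)) * hw +
      (a4 + a5 * w ^ 2 + a6 * w ^ 4 + a7 * w ^ 6) *
        (b4 + b5 * w ^ 2 + b6 * w ^ 4 + b7 * w ^ 6) * hz
  rw [key, key]
  ring

theorem val_step (hQ : (103 : Q) = 0) (κ μ : ℕ) (hw : w ^ 8 = 0) (hz : z ^ 2 = κ * w ^ 6)
    (a b c : C8) :
    (step κ μ a b c).val w z =
      2 * w ^ 2 * c.val w z + z * b.val w z + μ * w ^ 4 * a.val w z := by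
  simp only [step, val, cast_mod hQ]
  push_cast
  linear_combination -(2 * c.a3 + 2 * z * c.a7 + μ * (a.a2 + a.a3 * w ^ 2) +
    μ * z * (a.a6 + a.a7 * w ^ 2) + κ * (b.a5 + b.a6 * w ^ 2 + b.a7 * w ^ 4)) * hw -
    (b.a4 + b.a5 * w ^ 2 + b.a6 * w ^ 4 + b.a7 * w ^ 6) * hz

theorem val_axpy (hQ : (103 : Q) = 0) (m : ℕ) (x y : C8) :
    (axpy m x y).val w z = m * x.val w z + y.val w z := by
  simp only [axpy, val, cast_mod hQ]
  push_cast
  ring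

theorem val_zero : zero.val w z = 0 := by simp [zero, val]

end val

theorem minor_red (κ : ℕ) (x y u v : C8) : (minor κ x y u v).Red := by
  simp [Red, minor, toL, Nat.mod_lt]

theorem dual_lt (w0 w1 w2 w3 : ℕ) (x : C8) : ∀ a ∈ x.dual w0 w1 w2 w3, a < 103 := by
  simp [dual, Nat.mod_lt]

/-- A linear form evaluated on a product, as a dot product. -/
theorem dot_dual {Q : Type*} [CommRing Q] {w z : Q} (hQ : (103 : Q) = 0) (κ : ℕ) (hw : w ^ 8 = 0)
    (hz : z ^ 2 = κ * w ^ 6) [Algebra (ZMod 103) Q] (ℓ : Q →ₗ[ZMod 103] ZMod 103)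
    (w0 w1 w2 w3 : ℕ) (h0 : ℓ z = w0) (h1 : ℓ (z * w ^ 2) = w1) (h2 : ℓ (z * w ^ 4) = w2)
    (h3 : ℓ (z * w ^ 6) = w3) (h0' : ℓ 1 = 0) (h1' : ℓ (w ^ 2) = 0) (h2' : ℓ (w ^ 4) = 0)
    (h3' : ℓ (w ^ 6) = 0) (x y : C8) :
    (dot x.toL (y.dual w0 w1 w2 w3) : ZMod 103) = ℓ (x.val w z * y.val w z) := by
  have hv : ∀ x : C8, ℓ (x.val w z) =
      x.a4 * w0 + x.a5 * w1 + x.a6 * w2 + x.a7 * w3 := by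
    intro x
    have e : x.val w z = (x.a0 : ZMod 103) • (1 : Q) + (x.a1 : ZMod 103) • w ^ 2 +
        (x.a2 : ZMod 103) • w ^ 4 + (x.a3 : ZMod 103) • w ^ 6 + (x.a4 : ZMod 103) • z +
        (x.a5 : ZMod 103) • (z * w ^ 2) + (x.a6 : ZMod 103) • (z * w ^ 4) +
        (x.a7 : ZMod 103) • (z * w ^ 6) := by
      simp only [val, Algebra.smul_def, map_natCast]
      ring
    rw [e]
    simp only [map_add, map_smul, h0, h1, h2, h3, h0', h1', h2', h3', smul_eq_mul]
    ring
  have hm : x.val w z * y.val w z = (minor κ x y zero zero).val w z := by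
    rw [val_minor hQ κ hw hz, val_zero]; ring
  rw [hm, hv]
  obtain ⟨a0, a1, a2, a3, a4, a5, a6, a7⟩ := x
  obtain ⟨b0, b1, b2, b3, b4, b5, b6, b7⟩ := y
  have h103 : (103 : ZMod 103) = 0 := rfl
  simp only [minor, dual, toL, dot, zero, cast_mod h103]
  push_cast
  simp only [cast_mod h103]
  push_cast
  ring

end C8

end SpinLef

/-! ### Tables of determinants -/

namespace SpinLef

/-- The linear recurrence sequence `0, 0, 0, 1, 0, 2w², z, …` with characteristic polynomial
`t⁴ - 2w²t² - zt - μw⁴`. -/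
def useq {R : Type*} [CommRing R] (w z μ : R) : ℕ → R
  | 0 => 0
  | 1 => 0
  | 2 => 0
  | 3 => 1
  | m + 4 => 2 * w ^ 2 * useq w z μ (m + 2) + z * useq w z μ (m + 1) + μ * w ^ 4 * useq w z μ m

/-- `n` consecutive terms of the recurrence, the first four of which are `a, b, c, d`. -/
def hlist (κ μ n : ℕ) (a b c d : C8) : List C8 :=
  Nat.rec (fun _ _ _ _ => []) (fun _ ih a b c d =>
    C8.force (C8.step κ μ a b c) fun e => a :: ih b c d e) n a b c d

/-- `∑ₜ p * c ^ t * IF[t] * L[t]`. -/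
def gsum (c : ℕ) (IF : List ℕ) (p : ℕ) (L : List C8) : C8 :=
  List.rec (fun _ _ => C8.zero) (fun f _ ih p L =>
    C8.axpy (p * f) (L.headD C8.zero) (force (p * c % 103) fun p' => ih p' L.tail)) IF p L

/-- The first `n` of the sums `∑ₜ c ^ t * IF[t] * L[m + t]`. -/
def glist (c : ℕ) (IF : List ℕ) (n : ℕ) (L : List C8) : List C8 :=
  Nat.rec (fun _ => []) (fun _ ih L => C8.force (gsum c IF 1 L) fun x => x :: ih L.tail) n L

/-- The `i`-th entry of a list, or zero. -/
def get (L : List C8) (i : ℕ) : C8 := L.getD i C8.zero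

section

variable {Q : Type*} [CommRing Q] {w z : Q}

theorem val_hlist (hQ : (103 : Q) = 0) (κ μ : ℕ) (hw : w ^ 8 = 0) (hz : z ^ 2 = κ * w ^ 6)
    (n i : ℕ) (a b c d : C8) (ha : a.val w z = useq w z (μ : Q) i)
    (hb : b.val w z = useq w z (μ : Q) (i + 1)) (hc : c.val w z = useq w z (μ : Q) (i + 2))
    (hd : d.val w z = useq w z (μ : Q) (i + 3)) (m : ℕ) (hm : m < n) :
    (get (hlist κ μ n a b c d) m).val w z = useq w z (μ : Q) (i + m) := by
  induction n generalizing i a b c d m with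
  | zero => omega
  | succ n ih =>
    have e : hlist κ μ (n + 1) a b c d = C8.force (C8.step κ μ a b c) fun e =>
      a :: hlist κ μ n b c d e := rfl
    rw [e, C8.force_eq]
    cases m with
    | zero => exact ha
    | succ m =>
      have := ih (i + 1) b c d (C8.step κ μ a b c) hb hc hd
        (by rw [C8.val_step hQ κ μ hw hz, ha, hb, hc]; rfl) m (by omega)
      rw [show i + (m + 1) = i + 1 + m by omega, ← this]
      rfl

theorem val_gsum (hQ : (103 : Q) = 0) (c : ℕ) (IF : List ℕ) (p : ℕ) (L : List C8) :
    (gsum c IF p L).val w z = ∑ t ∈ range IF.length,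
      (p : Q) * (c : Q) ^ t * (IF.getD t 0 : ℕ) * (get L t).val w z := by
  induction IF generalizing p L with
  | nil => simpa [gsum] using C8.val_zero
  | cons f IF ih =>
    have e : gsum c (f :: IF) p L = C8.axpy (p * f) (L.headD C8.zero)
      (force (p * c % 103) fun p' => gsum c IF p' L.tail) := rfl
    rw [e, force_eq, C8.val_axpy hQ, ih, List.length_cons, Finset.sum_range_succ', add_comm]
    congr 1
    · refine Finset.sum_congr rfl fun t _ => ?_
      have : get L.tail t = get L (t + 1) := by cases L <;> simp [get]
      rw [C8.cast_mod hQ, this, List.getD_cons_succ]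
      push_cast
      ring
    · have : L.headD C8.zero = get L 0 := by cases L <;> rfl
      rw [this]
      simp

theorem get_glist (c : ℕ) (IF : List ℕ) (n : ℕ) (L : List C8) (m : ℕ) (hm : m < n) :
    get (glist c IF n L) m = gsum c IF 1 (L.drop m) := by
  induction n generalizing L m with
  | zero => omega
  | succ n ih =>
    have e : glist c IF (n + 1) L = C8.force (gsum c IF 1 L) fun x => x :: glist c IF n L.tail :=
      rfl
    rw [e, C8.force_eq]
    cases m with
    | zero => rfl
    | succ m =>
      rw [← List.drop_tail, ← ih _ m (by omega)]
      rfl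

theorem val_glist (hQ : (103 : Q) = 0) (c : ℕ) (IF : List ℕ) (n : ℕ) (L : List C8) (H : ℕ → Q)
    (hL : ∀ i < n + IF.length, (get L i).val w z = H i) (m : ℕ) (hm : m < n) :
    (get (glist c IF n L) m).val w z =
      ∑ t ∈ range IF.length, (c : Q) ^ t * (IF.getD t 0 : ℕ) * H (m + t) := by
  rw [get_glist c IF n L m hm, val_gsum hQ]
  refine Finset.sum_congr rfl fun t ht => ?_
  have ht := Finset.mem_range.1 ht
  have : get (L.drop m) t = get L (m + t) := by simp [get, List.getD_eq_getElem?_getD]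
  rw [this, hL _ (by omega), Nat.cast_one, one_mul]

end

/-- The six `2 × 2` minors in the rows `(a, b)`, as one list. -/
def ulist (κ : ℕ) (L M : List C8) (a b : ℕ) : List ℕ :=
  (mlist κ L M a b 0 1).toL ++ ((mlist κ L M a b 0 2).toL ++ ((mlist κ L M a b 0 3).toL ++
  ((mlist κ L M a b 1 2).toL ++ ((mlist κ L M a b 1 3).toL ++ (mlist κ L M a b 2 3).toL))))
where
  /-- The minor of the rows `(L[a + ·], M[b + ·])` in the columns `j, k`. -/
  mlist (κ : ℕ) (L M : List C8) (a b j k : ℕ) : C8 :=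
    C8.minor κ (get L (a + j)) (get M (b + k)) (get L (a + k)) (get M (b + j))

/-- The forms dual to the complementary `2 × 2` minors, in the order of `ulist`. -/
def vlist (κ w0 w1 w2 w3 : ℕ) (L M : List C8) (a b : ℕ) : List ℕ :=
  (ulist.mlist κ L M a b 2 3).dual w0 w1 w2 w3 ++
  ((ulist.mlist κ L M a b 3 1).dual w0 w1 w2 w3 ++
  ((ulist.mlist κ L M a b 1 2).dual w0 w1 w2 w3 ++
  ((ulist.mlist κ L M a b 0 3).dual w0 w1 w2 w3 ++
  ((ulist.mlist κ L M a b 2 0).dual w0 w1 w2 w3 ++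
  (ulist.mlist κ L M a b 0 1).dual w0 w1 w2 w3))))

/-- The list `f (N + 1 - n), …, f N`. -/
def mkL (n N : ℕ) (f : ℕ → ℕ) : List ℕ :=
  Nat.rec [] (fun i ih => force (f (N - i)) fun v => v :: ih) n

/-- The middle digit of a product, modulo `103`. -/
def dotm (u v : ℕ) : ℕ := dig 24 (u * v) 47 % 103

/-- The packed list of the values `dotm u v`. -/
def trow (u : ℕ) (V : List ℕ) : ℕ := List.rec 0 (fun v _ ih => dotm u v + 2 ^ 8 * ih) V

/-- The packed table of the values `dotm u v`; rows have `399` entries of `8` bits. -/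
def tab (U V : List ℕ) : ℕ := List.rec 0 (fun u _ ih => trow u V + 2 ^ 3192 * ih) U

/-- The packed minors, for all exponents `a ≤ 2` and `b ≤ 10`. -/
def Ulst (κ : ℕ) (L M : List C8) : List ℕ :=
  mkL 33 32 (fun i => packL 24 (ulist κ L M (i / 11) (i % 11)))

/-- The packed dual forms, for all exponents `a ≤ 18` and `b ≤ 20`. -/
def Vlst (κ w0 w1 w2 w3 : ℕ) (L M : List C8) : List ℕ :=
  mkL 399 398 (fun i => packR (vlist κ w0 w1 w2 w3 L M (i / 21) (i % 21)))

/-- Looks up the moment of the coded exponent `c` in the table `T`; the factorial of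
`N - c / 2 ^ 18` is taken from the packed list `F`. -/
def entry (N T F c : ℕ) : ℕ :=
  force (c % 256) fun u => force (dig 3192 T u) fun r =>
    dig 8 r (c / 256 % 1024) * dig 24 F (N - c / 2 ^ 18) % 103

/-- Computes the table of moments and runs the elimination. -/
def check (N κ w0 w1 w2 w3 : ℕ) (A B C D : List C8) (F : ℕ) (codes : List ℕ) : Bool :=
  force (tab (Ulst κ A B) (Vlst κ w0 w1 w2 w3 C D)) fun T =>
    run (entry N T F) codes.length codes codes 0 []

theorem get_mkL (n N : ℕ) (f : ℕ → ℕ) (i : ℕ) (hi : i < n) :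
    (mkL n N f).getD i 0 = f (N + 1 + i - n) := by
  induction n generalizing i with
  | zero => omega
  | succ n ih =>
    have e : mkL (n + 1) N f = force (f (N - n)) fun v => v :: mkL n N f := rfl
    rw [e, force_eq]
    cases i with
    | zero => simp [Nat.add_sub_add_right]
    | succ i =>
      rw [List.getD_cons_succ, ih i (by omega)]
      congr 1
      omega

theorem length_mkL (n N : ℕ) (f : ℕ → ℕ) : (mkL n N f).length = n := by
  induction n with
  | zero => rfl
  | succ n ih =>
    have e : mkL (n + 1) N f = force (f (N - n)) fun v => v :: mkL n N f := rfl
    rw [e, force_eq, List.length_cons, ih]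

theorem trow_eq (u : ℕ) (V : List ℕ) : trow u V = packL 8 (V.map (dotm u)) := by
  induction V with
  | nil => rfl
  | cons v V ih =>
    change dotm u v + 2 ^ 8 * trow u V = _
    rw [ih]; rfl

theorem tab_eq (U V : List ℕ) : tab U V = packL 3192 (U.map fun u => trow u V) := by
  induction U with
  | nil => rfl
  | cons u U ih =>
    have e : tab (u :: U) V = trow u V + 2 ^ 3192 * tab U V := rfl
    rw [e, ih]; rfl

theorem entry_lt (N T F c : ℕ) : entry N T F c < 103 := by
  rw [entry, force_eq, force_eq]
  exact Nat.mod_lt _ (by norm_num)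

theorem length_toL (x : C8) : x.toL.length = 8 := by cases x; rfl

theorem length_dual (w0 w1 w2 w3 : ℕ) (x : C8) : (x.dual w0 w1 w2 w3).length = 8 := by
  cases x; rfl

theorem getD_map (f : ℕ → ℕ) (L : List ℕ) (i : ℕ) (hi : i < L.length) :
    (L.map f).getD i 0 = f (L.getD i 0) := by
  rw [List.getD_eq_getElem _ _ (by simpa using hi), List.getElem_map,
    List.getD_eq_getElem _ _ hi]

/-- A table entry is the dot product of the two coded lists, times the factorial. -/
theorem entry_eq (N κ w0 w1 w2 w3 : ℕ) (A B C D : List C8) (F a1 a2 a3 a4 d : ℕ) (h1 : a1 ≤ 2)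
    (h2 : a2 ≤ 10) (h3 : a3 ≤ 18) (h4 : a4 ≤ 20) :
    (entry N (tab (Ulst κ A B) (Vlst κ w0 w1 w2 w3 C D)) F
      (a1 * 11 + a2 + 256 * (a3 * 21 + a4) + 2 ^ 18 * d) : ZMod 103) =
    (dot (ulist κ A B a1 a2) (vlist κ w0 w1 w2 w3 C D a3 a4) : ℕ) * (dig 24 F (N - d) : ℕ) := by
  have hd : ∀ u v, dotm u v < 2 ^ 8 := fun u v =>
    (Nat.mod_lt _ (by norm_num)).trans (by norm_num)
  have hUl : (Ulst κ A B).length = 33 := length_mkL _ _ _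
  have hVl : (Vlst κ w0 w1 w2 w3 C D).length = 399 := length_mkL _ _ _
  have hu : (Ulst κ A B).getD (a1 * 11 + a2) 0 = packL 24 (ulist κ A B a1 a2) := by
    rw [Ulst, get_mkL _ _ _ _ (by omega), show 32 + 1 + (a1 * 11 + a2) - 33 = a1 * 11 + a2 by omega]
    rw [show (a1 * 11 + a2) / 11 = a1 by omega, show (a1 * 11 + a2) % 11 = a2 by omega]
  have hv : (Vlst κ w0 w1 w2 w3 C D).getD (a3 * 21 + a4) 0 =
      packR (vlist κ w0 w1 w2 w3 C D a3 a4) := by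
    rw [Vlst, get_mkL _ _ _ _ (by omega), show 398 + 1 + (a3 * 21 + a4) - 399 = a3 * 21 + a4 by omega]
    rw [show (a3 * 21 + a4) / 21 = a3 by omega, show (a3 * 21 + a4) % 21 = a4 by omega]
  have hrow : ∀ u, trow u (Vlst κ w0 w1 w2 w3 C D) < 2 ^ 3192 := fun u => by
    have := packL_lt 8 ((Vlst κ w0 w1 w2 w3 C D).map (dotm u)) (by simpa using fun v _ => hd _ v)
    rwa [← trow_eq, List.length_map, hVl] at this
  have hT := dig_packL 3192 ((Ulst κ A B).map fun u => trow u (Vlst κ w0 w1 w2 w3 C D))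
    (by simpa using fun u _ => hrow u) (a1 * 11 + a2) (by rw [List.length_map, hUl]; omega)
  rw [← tab_eq, getD_map _ _ _ (by omega), hu] at hT
  have hR := dig_packL 8 ((Vlst κ w0 w1 w2 w3 C D).map (dotm (packL 24 (ulist κ A B a1 a2))))
    (by simpa using fun v _ => hd _ v) (a3 * 21 + a4) (by rw [List.length_map, hVl]; omega)
  rw [← trow_eq, getD_map _ _ _ (by omega), hv, dotm, dig_pack_mul] at hR
  · have e2 : (a1 * 11 + a2 + 256 * (a3 * 21 + a4) + 2 ^ 18 * d) / 256 = a3 * 21 + a4 + 1024 * d := by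
      rw [show a1 * 11 + a2 + 256 * (a3 * 21 + a4) + 2 ^ 18 * d =
        a1 * 11 + a2 + 256 * (a3 * 21 + a4 + 1024 * d) by ring, Nat.add_mul_div_left _ _ (by norm_num)]
      omega
    generalize tab (Ulst κ A B) (Vlst κ w0 w1 w2 w3 C D) = T at hT ⊢
    rw [entry, force_eq, force_eq,
      show (a1 * 11 + a2 + 256 * (a3 * 21 + a4) + 2 ^ 18 * d) % 256 = a1 * 11 + a2 by omega,
      show (a1 * 11 + a2 + 256 * (a3 * 21 + a4) + 2 ^ 18 * d) / 256 % 1024 = a3 * 21 + a4 by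
        rw [e2]; omega,
      show (a1 * 11 + a2 + 256 * (a3 * 21 + a4) + 2 ^ 18 * d) / 2 ^ 18 = d by omega,
      hT, hR, C8.cast_mod rfl, Nat.cast_mul, C8.cast_mod rfl]
  · simp [ulist, length_toL]
  · simp [vlist, length_dual]
  · simp only [ulist, List.mem_append]
    rintro a (h | h | h | h | h | h) <;> exact C8.minor_red _ _ _ _ _ a h
  · simp only [vlist, List.mem_append]
    rintro a (h | h | h | h | h | h) <;> exact C8.dual_lt _ _ _ _ _ a h

theorem det_four {R : Type*} [CommRing R] (M : Matrix (Fin 4) (Fin 4) R) :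
    M.det = (M 0 0 * M 1 1 - M 0 1 * M 1 0) * (M 2 2 * M 3 3 - M 2 3 * M 3 2) +
      (M 0 0 * M 1 2 - M 0 2 * M 1 0) * (M 2 3 * M 3 1 - M 2 1 * M 3 3) +
      (M 0 0 * M 1 3 - M 0 3 * M 1 0) * (M 2 1 * M 3 2 - M 2 2 * M 3 1) +
      (M 0 1 * M 1 2 - M 0 2 * M 1 1) * (M 2 0 * M 3 3 - M 2 3 * M 3 0) +
      (M 0 1 * M 1 3 - M 0 3 * M 1 1) * (M 2 2 * M 3 0 - M 2 0 * M 3 2) +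
      (M 0 2 * M 1 3 - M 0 3 * M 1 2) * (M 2 0 * M 3 1 - M 2 1 * M 3 0) := by
  rw [Matrix.det_succ_row_zero]
  simp [Fin.sum_univ_succ, Matrix.det_fin_three, Fin.succAbove]
  ring

end SpinLef

/-! ### The test monomials and the computation -/

namespace SpinLef

/-- The inverse factorials modulo `103`. -/
def invFact : List ℕ := [1, 1, 52, 86, 73, 97, 102, 44, 57, 75, 59, 99, 34, 66, 93, 68, 30, 26,
  93, 32, 84]

/-- The factorials modulo `103` of the numbers up to `20`, packed with `24` bits each. -/
def facts : ℕ := packL 24 ((List.range 21).map fun k => k.factorial % 103)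

/-- The sequence `u` for `w ^ 4 = z ^ 2 = 0`. -/
def hl4 : List C8 := hlist 0 0 50 C8.zero C8.zero C8.zero ⟨1, 0, 0, 0, 0, 0, 0, 0⟩

/-- The sequence `0, u` for `w ^ 8 = 0`, `z ^ 2 = 8 * w ^ 6`. -/
def hl5 : List C8 :=
  C8.zero :: hlist 8 2 50 C8.zero C8.zero C8.zero ⟨1, 0, 0, 0, 0, 0, 0, 0⟩

/-- The last row of a `3 × 3` determinant padded to size `4`. -/
def padL : List C8 := [C8.zero, C8.zero, C8.zero, ⟨1, 0, 0, 0, 0, 0, 0, 0⟩]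

/-- The exponent vector of a code. -/
def expo (c : ℕ) : Fin 4 → ℕ :=
  ![c % 256 / 11, c % 256 % 11, c / 256 % 1024 / 21, c / 256 % 1024 % 21]

/-- The code of an exponent vector. -/
def code (a : Fin 4 → ℕ) : ℕ :=
  a 0 * 11 + a 1 + 256 * (a 2 * 21 + a 3) + 2 ^ 18 * (a 0 + a 1 + a 2 + a 3)

/-- The code describes an exponent vector within the bounds of the tables. -/
def okCode (b c : ℕ) : Bool :=
  c == code (expo c) && decide (expo c 0 ≤ 1) && decide (expo c 1 ≤ 5) && decide (expo c 2 ≤ 9) &&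
    decide (expo c 3 ≤ b)

/-- Codes of monomials in `y₁, y₂, y₃` whose moment matrix is invertible modulo `103`. The
list is ordered by degree, and for `d ≤ 6` its first `hilb4 d` members have degree at most `d`. -/
def codes4 : List ℕ := [0, 267520, 262145, 262155, 535040, 529665, 524290, 529675, 524300, 802560,
  797185, 791810, 786435, 797195, 791820, 786445, 1070080, 1064705, 1059330, 1053955, 1048580,
  1064715, 1059340, 1337600, 1332225, 1326850, 1321475, 1316100, 1605120, 1599745]

/-- The analogous codes of monomials in `y₁, y₂, y₃, y₄`, with `hilb5 d` in place of `hilb4 d`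
and `d ≤ 10`. -/
def codes5 : List ℕ := [0, 262400, 267520, 262145, 262155, 524800, 529920, 535040, 524545, 529665,
  524290, 524555, 529675, 524300, 787200, 792320, 797440, 802560, 786945, 792065, 797185, 786690,
  791810, 786435, 786955, 792075, 797195, 786700, 791820, 786445, 1049600, 1054720, 1059840,
  1064960, 1070080, 1049345, 1054465, 1059585, 1064705, 1049090, 1054210, 1059330, 1048835,
  1053955, 1048580, 1049355, 1054475, 1059595, 1064715, 1049100, 1054220, 1059340, 1048845,
  1053965, 1312000, 1317120, 1322240, 1327360, 1332480, 1337600, 1311745, 1316865, 1321985,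
  1327105, 1332225, 1311490, 1316610, 1321730, 1326850, 1311235, 1316355, 1321475, 1310980,
  1316100, 1310725, 1311755, 1316875, 1321995, 1327115, 1332235, 1311500, 1316620, 1321740,
  1326860, 1311245, 1574400, 1579520, 1584640, 1589760, 1594880, 1600000, 1605120, 1574145,
  1579265, 1584385, 1589505, 1594625, 1599745, 1573890, 1579010, 1584130, 1589250, 1594370,
  1573635, 1578755, 1583875, 1588995, 1573380, 1578500, 1583620, 1573125, 1578245, 1574155,
  1579275, 1584395, 1589515, 1594635, 1599755, 1573900, 1579020, 1836800, 1841920, 1847040,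
  1852160, 1857280, 1862400, 1867520, 1872640, 1836545, 1841665, 1846785, 1851905, 1857025,
  1862145, 1867265, 1836290, 1841410, 1846530, 1851650, 1856770, 1861890, 1836035, 1841155,
  1846275, 1851395, 1856515, 1835780, 1840900, 1851140, 1835525, 1845765, 1836555, 1841675,
  1846795, 1851915, 2099200, 2104320, 2109440, 2114560, 2119680, 2124800, 2129920, 2135040,
  2140160, 2098945, 2104065, 2109185, 2114305, 2119425, 2124545, 2129665, 2134785, 2098690,
  2103810, 2108930, 2114050, 2119170, 2124290, 2129410, 2098435, 2103555, 2108675, 2113795,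
  2124035, 2098180, 2361600, 2366720, 2371840, 2376960, 2382080, 2387200, 2392320, 2397440,
  2402560, 2407680, 2361345, 2366465, 2371585, 2376705, 2381825, 2386945, 2392065, 2397185,
  2402305, 2361090, 2624000, 2629120, 2634240, 2639360, 2644480, 2649600, 2654720]

/-- The elimination for `n = 4`. The numbers `70, 2` are `2³ / 3!` and `2 / 1!` modulo `103`. -/
theorem check4 : check 12 0 70 2 0 0 (glist 2 invFact 24 hl4) (glist 3 invFact 24 hl4)
    (glist 4 invFact 24 hl4) padL facts codes4 = true := by
  decide +kernel

theorem codes4_ok : codes4.all (okCode 0) = true := by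
  decide +kernel

/-- The elimination for `n = 5`. The numbers `70, 14, 70, 2` are `2⁷ / 7!`, `2⁵ / 5!`, `2³ / 3!` and
`2 / 1!` modulo `103`. -/
theorem check5 : check 20 8 70 14 70 2 (glist 2 invFact 24 hl5) (glist 3 invFact 24 hl5)
    (glist 4 invFact 24 hl5) (glist 5 invFact 24 hl5) facts codes5 = true := by
  decide +kernel

theorem codes5_ok : codes5.all (okCode 10) = true := by
  decide +kernel

end SpinLef

/-! ### Elementary symmetric polynomials in four and five arguments -/

namespace SpinLef

theorem esymm4 {R : Type*} [CommRing R] (v : Fin 4 → R) :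
    esymmOf 1 v = v 0 + v 1 + v 2 + v 3 ∧ esymmOf 2 v = v 0 * v 1 + v 0 * v 2 + v 0 * v 3 + v 1
      * v 2 + v 1 * v 3 + v 2 * v 3 ∧ esymmOf 3 v = v 0 * v 1 * v 2 + v 0 * v 1 * v 3 + v 0 * v
      2 * v 3 + v 1 * v 2 * v 3 := by
  refine ⟨?_, ?_, ?_⟩
  · rw [esymmOf, show powersetCard 1 (univ : Finset (Fin 4)) = {{0}, {1}, {2}, {3}} by decide]
    simp +decide [Finset.sum_insert]
    try ring
  · rw [esymmOf, show powersetCard 2 (univ : Finset (Fin 4)) = {{0, 1}, {0, 2}, {0, 3}, {1, 2},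
      {1, 3}, {2, 3}} by decide]
    simp +decide [Finset.sum_insert, Finset.prod_insert]
    try ring
  · rw [esymmOf, show powersetCard 3 (univ : Finset (Fin 4)) = {{0, 1, 2}, {0, 1, 3}, {0, 2, 3},
      {1, 2, 3}} by decide]
    simp +decide [Finset.sum_insert, Finset.prod_insert]
    try ring

theorem esymm5 {R : Type*} [CommRing R] (v : Fin 5 → R) :
    esymmOf 1 v = v 0 + v 1 + v 2 + v 3 + v 4 ∧ esymmOf 2 v = v 0 * v 1 + v 0 * v 2 + v 0 * v 3
      + v 0 * v 4 + v 1 * v 2 + v 1 * v 3 + v 1 * v 4 + v 2 * v 3 + v 2 * v 4 + v 3 * v 4 ∧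
      esymmOf 3 v = v 0 * v 1 * v 2 + v 0 * v 1 * v 3 + v 0 * v 1 * v 4 + v 0 * v 2 * v 3 + v 0
      * v 2 * v 4 + v 0 * v 3 * v 4 + v 1 * v 2 * v 3 + v 1 * v 2 * v 4 + v 1 * v 3 * v 4 + v 2
      * v 3 * v 4 ∧ esymmOf 4 v = v 0 * v 1 * v 2 * v 3 + v 0 * v 1 * v 2 * v 4 + v 0 * v 1 * v
      3 * v 4 + v 0 * v 2 * v 3 * v 4 + v 1 * v 2 * v 3 * v 4 := by
  refine ⟨?_, ?_, ?_, ?_⟩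
  · rw [esymmOf, show powersetCard 1 (univ : Finset (Fin 5)) = {{0}, {1}, {2}, {3}, {4}} by
      decide]
    simp +decide [Finset.sum_insert]
    try ring
  · rw [esymmOf, show powersetCard 2 (univ : Finset (Fin 5)) = {{0, 1}, {0, 2}, {0, 3}, {0, 4},
      {1, 2}, {1, 3}, {1, 4}, {2, 3}, {2, 4}, {3, 4}} by decide]
    simp +decide [Finset.sum_insert, Finset.prod_insert]
    try ring
  · rw [esymmOf, show powersetCard 3 (univ : Finset (Fin 5)) = {{0, 1, 2}, {0, 1, 3}, {0, 1, 4},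
      {0, 2, 3}, {0, 2, 4}, {0, 3, 4}, {1, 2, 3}, {1, 2, 4}, {1, 3, 4}, {2, 3, 4}} by decide]
    simp +decide [Finset.sum_insert, Finset.prod_insert]
    try ring
  · rw [esymmOf, show powersetCard 4 (univ : Finset (Fin 5)) = {{0, 1, 2, 3}, {0, 1, 2, 4}, {0, 1,
      3, 4}, {0, 2, 3, 4}, {1, 2, 3, 4}} by decide]
    simp +decide [Finset.sum_insert, Finset.prod_insert]
    try ring

end SpinLef

/-! ### The integration functional -/

namespace SpinLef

section Functional

variable (r : ℕ) (K : Type*) [CommRing K]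

/-- The sequence `h₀, h₁, …` in `K[w, z]`: the sequence `useq` with `μ = 2 (r - 3)`, shifted so that
its first nonzero term has index `r`. Here `w` and `z` are the variables `X 0` and `X 1`. -/
def hs (m : ℕ) : MvPolynomial (Fin 2) K :=
  if m < r - 3 then 0 else useq (X 0) (X 1) ((2 * (r - 3) : ℕ) : MvPolynomial (Fin 2) K) (m - (r - 3))

/-- Coefficient extraction, for `r = 3` and `r = 4`: the linear form on `K[w, z]` that kills the
multiples of `w ^ (4 * r - 8)` and of `z ^ 2 - 8 * (r - 3) * w ^ 6`, takes the value `1` on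
`w ^ (4 * r - 9) * z`, and is zero on the other monomials of degree at most one in `z`. For `r = 3`
the truncated exponent in the second term is multiplied by zero. -/
def lam : MvPolynomial (Fin 2) K →ₗ[K] K :=
  lcoeff K (Finsupp.single 0 (4 * r - 9) + Finsupp.single 1 1) +
    ((8 * (r - 3) : ℕ) : K) • lcoeff K (Finsupp.single 0 (4 * r - 9 - 6) + Finsupp.single 1 3)

/-- The `K[w, z]`-linear form on `K[w, z][y₁, …, y_r]` with `∏ yᵢ ^ mᵢ ↦ ∏ h_{mᵢ}`. -/
def Phi : MvPolynomial (Fin r) (MvPolynomial (Fin 2) K) →ₗ[MvPolynomial (Fin 2) K]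
    MvPolynomial (Fin 2) K :=
  (basisMonomials (Fin r) (MvPolynomial (Fin 2) K)).constr (MvPolynomial (Fin 2) K)
    fun m => ∏ i, hs r K (m i)

/-- The Vandermonde determinant in `y₁, …, y_r`. -/
def vand : MvPolynomial (Fin r) (MvPolynomial (Fin 2) K) :=
  Matrix.det (Matrix.of fun j i : Fin r => X i ^ (j : ℕ))

/-- The substitution `x₁ ↦ 2w`, `x_{i+1} ↦ yᵢ`. -/
def sub : MvPolynomial (Fin (r + 1)) K →ₐ[K] MvPolynomial (Fin r) (MvPolynomial (Fin 2) K) :=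
  aeval (Fin.cons (C (2 * X 0)) fun i => X i)

/-- The candidate for the integration functional of `A`. -/
def phi : MvPolynomial (Fin (r + 1)) K →ₗ[K] K :=
  lam r K ∘ₗ (Phi r K).restrictScalars K ∘ₗ LinearMap.mulRight K (vand r K) ∘ₗ (sub r K).toLinearMap

theorem phi_apply (F : MvPolynomial (Fin (r + 1)) K) :
    phi r K F = lam r K (Phi r K (sub r K F * vand r K)) := rfl

variable {r K}

theorem Phi_monomial (m : Fin r →₀ ℕ) (c : MvPolynomial (Fin 2) K) :
    Phi r K (monomial m c) = c * ∏ i, hs r K (m i) := by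
  have : monomial m c = c • basisMonomials (Fin r) (MvPolynomial (Fin 2) K) m := by
    simp [smul_monomial]
  rw [this, map_smul, Phi, Module.Basis.constr_basis, smul_eq_mul]

theorem Phi_prod_pow (c : MvPolynomial (Fin 2) K) (m : Fin r → ℕ) :
    Phi r K (C c * ∏ i, X i ^ m i) = c * ∏ i, hs r K (m i) := by
  have : C c * ∏ i, (X i : MvPolynomial (Fin r) (MvPolynomial (Fin 2) K)) ^ m i =
      monomial (Finsupp.equivFunOnFinite.symm m) c := by
    rw [monomial_eq, Finsupp.prod_fintype _ _ (by simp)]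
    simp
  rw [this, Phi_monomial]
  simp

theorem Phi_C_mul (c : MvPolynomial (Fin 2) K) (F) : Phi r K (C c * F) = c * Phi r K F := by
  rw [← smul_eq_C_mul, map_smul, smul_eq_mul]

/-- Multiplying a product of univariate polynomials by the Vandermonde determinant turns the
functional into a determinant of univariate functionals. -/
theorem Phi_prod_vand (s : Finset ℕ) (a : Fin r → ℕ → MvPolynomial (Fin 2) K)
    (b : Fin r → ℕ → ℕ) :
    Phi r K ((∏ i, ∑ t ∈ s, C (a i t) * X i ^ b i t) * vand r K) =
      Matrix.det (Matrix.of fun j i : Fin r => ∑ t ∈ s, a i t * hs r K (b i t + j)) := by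
  have key : ∀ σ : Fin r → ℕ,
      Phi r K ((∏ i, ∑ t ∈ s, C (a i t) * X i ^ b i t) * ∏ i, X i ^ σ i) =
        ∏ i, ∑ t ∈ s, a i t * hs r K (b i t + σ i) := by
    intro σ
    rw [Finset.prod_univ_sum, Finset.prod_univ_sum, Finset.sum_mul, map_sum]
    refine Finset.sum_congr rfl fun f _ => ?_
    rw [Finset.prod_mul_distrib, ← map_prod, mul_assoc, ← Finset.prod_mul_distrib]
    simp_rw [← pow_add]
    rw [Phi_prod_pow, Finset.prod_mul_distrib]
  rw [vand, Matrix.det_apply', Matrix.det_apply', Finset.mul_sum, map_sum]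
  refine Finset.sum_congr rfl fun σ _ => ?_
  simp only [Matrix.of_apply]
  have hC : (((Equiv.Perm.sign σ : ℤˣ) : ℤ) : MvPolynomial (Fin r) (MvPolynomial (Fin 2) K)) =
      C (((Equiv.Perm.sign σ : ℤˣ) : ℤ) : MvPolynomial (Fin 2) K) := by simp
  rw [mul_left_comm, hC, Phi_C_mul, key]

theorem sub_X_zero : sub r K (X 0) = C (2 * X 0) := by simp [sub]

theorem sub_X_succ (i : Fin r) : sub r K (X i.succ) = X i := by simp [sub]

theorem sub_C (c : K) : sub r K (C c) = C (C c) := by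
  rw [sub, aeval_C]; rfl

/-- The value of the functional on the monomials. -/
theorem phi_monomial (m : Fin (r + 1) →₀ ℕ) (c : K) :
    phi r K (monomial m c) = c * lam r K ((2 * X 0) ^ m 0 *
      Matrix.det (Matrix.of fun j i : Fin r => hs r K (m i.succ + j))) := by
  have h1 : (monomial m c : MvPolynomial (Fin (r + 1)) K) =
      C c * (X 0 ^ m 0 * ∏ i : Fin r, X i.succ ^ m i.succ) := by
    rw [monomial_eq, Finsupp.prod_fintype _ _ (by simp), Fin.prod_univ_succ]
  have h2 : ∏ i : Fin r, (X i ^ m i.succ : MvPolynomial (Fin r) (MvPolynomial (Fin 2) K)) =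
      ∏ i : Fin r, ∑ t ∈ {0}, C 1 * X i ^ (m i.succ) := by simp
  rw [phi_apply, h1]
  rw [map_mul (sub r K), map_mul (sub r K), map_prod, map_pow, sub_X_zero, sub_C]
  simp only [map_pow, sub_X_succ]
  rw [← map_pow, h2, mul_assoc, mul_assoc, Phi_C_mul, Phi_C_mul,
    Phi_prod_vand {0} (fun _ _ => 1) (fun i _ => m i.succ)]
  simp only [Finset.sum_singleton, one_mul]
  rw [← smul_eq_C_mul, map_smul, smul_eq_mul]

end Functional

end SpinLef

namespace SpinLef

section Functional

variable {r : ℕ} {K : Type*} [CommRing K]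

theorem useq_map {R S : Type*} [CommRing R] [CommRing S] (f : R →+* S) (w z μ : R) :
    ∀ m, f (useq w z μ m) = useq (f w) (f z) (f μ) m
  | 0 => by simp [useq]
  | 1 => by simp [useq]
  | 2 => by simp [useq]
  | 3 => by simp [useq]
  | m + 4 => by
    simp only [useq, map_add, map_mul, map_pow, map_ofNat, useq_map f w z μ m,
      useq_map f w z μ (m + 1), useq_map f w z μ (m + 2)]

theorem hs_map {L : Type*} [CommRing L] (f : K →+* L) (m : ℕ) :
    MvPolynomial.map f (hs r K m) = hs r L m := by
  unfold hs
  split_ifs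
  · simp
  · simp [useq_map]

theorem lam_map {L : Type*} [CommRing L] (f : K →+* L) (F : MvPolynomial (Fin 2) K) :
    lam r L (MvPolynomial.map f F) = f (lam r K F) := by
  simp only [lam, LinearMap.add_apply, LinearMap.smul_apply, lcoeff_apply, coeff_map, smul_eq_mul,
    map_add, map_mul, map_natCast]

/-- The functional is compatible with change of coefficients. -/
theorem phi_map {L : Type*} [CommRing L] (f : K →+* L) (F : MvPolynomial (Fin (r + 1)) K) :
    phi r L (MvPolynomial.map f F) = f (phi r K F) := by
  induction F using MvPolynomial.induction_on' with
  | monomial m c =>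
    rw [map_monomial, phi_monomial, phi_monomial, map_mul f, ← lam_map, map_mul (MvPolynomial.map f),
      map_pow, RingHom.map_det]
    congr 3
    · simp
    · congr 1
      ext j i : 2
      simp [hs_map]
  | add p q hp hq => simp only [map_add, hp, hq]

/-- The weights of `w` and `z`. -/
def wts : Fin 2 → ℤ := ![1, 3]

theorem useq_hom (μ : K) : ∀ m, IsWeightedHomogeneous wts
    (useq (X 0) (X 1) (C μ) m : MvPolynomial (Fin 2) K) (m - 3 : ℤ)
  | 0 => isWeightedHomogeneous_zero ..
  | 1 => isWeightedHomogeneous_zero ..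
  | 2 => isWeightedHomogeneous_zero ..
  | 3 => isWeightedHomogeneous_one ..
  | m + 4 => by
    have hX0 : IsWeightedHomogeneous wts (X 0 : MvPolynomial (Fin 2) K) 1 :=
      isWeightedHomogeneous_X K wts 0
    have hX1 : IsWeightedHomogeneous wts (X 1 : MvPolynomial (Fin 2) K) 3 :=
      isWeightedHomogeneous_X K wts 1
    have h2 : IsWeightedHomogeneous wts (2 : MvPolynomial (Fin 2) K) 0 := by
      rw [← map_ofNat C 2]; exact isWeightedHomogeneous_C wts _
    refine IsWeightedHomogeneous.add (IsWeightedHomogeneous.add ?_ ?_) ?_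
    · convert (h2.mul (hX0.pow 2)).mul (useq_hom μ (m + 2)) using 1
      push_cast; simp; ring
    · convert hX1.mul (useq_hom μ (m + 1)) using 1
      push_cast; ring
    · convert ((isWeightedHomogeneous_C wts μ).mul (hX0.pow 4)).mul (useq_hom μ m) using 1
      push_cast; simp; ring

theorem hs_hom (hr : 3 ≤ r) (m : ℕ) :
    IsWeightedHomogeneous wts (hs r K m) (m - r : ℤ) := by
  unfold hs
  split_ifs with h
  · exact isWeightedHomogeneous_zero ..
  · have := useq_hom (K := K) ((2 * (r - 3) : ℕ) : K) (m - (r - 3))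
    rw [map_natCast] at this
    convert this using 1
    omega

theorem lam_hom (hr : 3 ≤ r) {F : MvPolynomial (Fin 2) K} {e : ℤ}
    (hF : IsWeightedHomogeneous wts F e) (he : e ≠ 4 * r - 6)
    (hr4 : r ≤ 4) : lam r K F = 0 := by
  have h1 := hF.coeff_eq_zero (Finsupp.single 0 (4 * r - 9) + Finsupp.single 1 1) (by
    simp [wts, Finsupp.weight_apply, Finsupp.sum_fintype]; omega)
  have h2 : ((8 * (r - 3) : ℕ) : K) *
      coeff (Finsupp.single 0 (4 * r - 9 - 6) + Finsupp.single 1 3) F = 0 := by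
    obtain rfl | rfl : r = 3 ∨ r = 4 := by omega
    · simp
    · rw [hF.coeff_eq_zero _ (by
        simp [wts, Finsupp.weight_apply, Finsupp.sum_fintype]; omega), mul_zero]
  simp only [lam, LinearMap.add_apply, LinearMap.smul_apply, lcoeff_apply, smul_eq_mul, h1, h2,
    add_zero]

/-- The functional vanishes on the monomials of degree other than `r (r + 1)`. -/
theorem phi_monomial_eq_zero (hr : r = 3 ∨ r = 4) (m : Fin (r + 1) →₀ ℕ) (c : K)
    (hm : ∑ i, m i ≠ r * (r + 1)) : phi r K (monomial m c) = 0 := by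
  have hr3 : 3 ≤ r := by omega
  rw [phi_monomial]
  have h2 : IsWeightedHomogeneous wts ((2 * X 0 : MvPolynomial (Fin 2) K) ^ m 0) (m 0 : ℤ) := by
    have h2 : IsWeightedHomogeneous wts (2 : MvPolynomial (Fin 2) K) 0 := by
      rw [← map_ofNat C 2]; exact isWeightedHomogeneous_C wts _
    convert (h2.mul (isWeightedHomogeneous_X K wts 0)).pow (m 0) using 1
    simp [wts]
  have hd : IsWeightedHomogeneous wts (Matrix.det (Matrix.of fun j i : Fin r =>
      hs r K (m i.succ + j))) (∑ i : Fin r, (m i.succ + i - r : ℤ)) := by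
    rw [Matrix.det_apply', ← mem_weightedHomogeneousSubmodule]
    refine Submodule.sum_mem _ fun σ _ => ?_
    have hp := IsWeightedHomogeneous.prod Finset.univ
      (fun i : Fin r => hs r K (m i.succ + (σ i : ℕ)))
      (fun i : Fin r => (((m i.succ + (σ i : ℕ) : ℕ) : ℤ) - r)) fun i _ => hs_hom hr3 _
    have hc := (isWeightedHomogeneous_C wts (((Equiv.Perm.sign σ : ℤˣ) : ℤ) : K)).mul hp
    rw [map_intCast, zero_add] at hc
    convert hc using 1
    push_cast
    simp only [Finset.sum_sub_distrib, Finset.sum_add_distrib]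
    rw [Equiv.sum_comp σ (fun i : Fin r => ((i : ℕ) : ℤ))]
    exact Iff.rfl
  rw [lam_hom hr3 (h2.mul hd) _ (by omega), mul_zero]
  rw [Fin.sum_univ_succ] at hm
  simp only [Finset.sum_sub_distrib, Finset.sum_add_distrib]
  obtain rfl | rfl := hr
  · simp [Fin.sum_univ_succ] at hm ⊢
    omega
  · simp [Fin.sum_univ_succ] at hm ⊢
    omega

end Functional

end SpinLef

/-! ### The functional vanishes on the relations -/

namespace SpinLef

section Kill

variable {r : ℕ} {K : Type*} [CommRing K]

theorem lam_pow_mul (F : MvPolynomial (Fin 2) K) : lam r K (X 0 ^ (4 * r - 9 + 1) * F) = 0 := by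
  rw [X_pow_eq_monomial]
  simp only [lam, LinearMap.add_apply, LinearMap.smul_apply, lcoeff_apply, coeff_monomial_mul']
  rw [if_neg, if_neg] <;> simp [Finsupp.le_iff]

theorem lam_rel_mul (hr : r = 3 ∨ r = 4) (F : MvPolynomial (Fin 2) K) :
    lam r K ((X 1 ^ 2 - ((8 * (r - 3) : ℕ) : MvPolynomial (Fin 2) K) * X 0 ^ 6) * F) = 0 := by
  rw [sub_mul, mul_assoc, ← map_natCast (C : K →+* MvPolynomial (Fin 2) K), ← smul_eq_C_mul,
    map_sub, map_smul, X_pow_eq_monomial, X_pow_eq_monomial]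
  simp only [lam, LinearMap.add_apply, LinearMap.smul_apply, lcoeff_apply, coeff_monomial_mul']
  obtain rfl | rfl := hr
  · simp
  · have h1 : (Finsupp.single 0 1 + Finsupp.single 1 3 - Finsupp.single 1 2 : Fin 2 →₀ ℕ) =
        Finsupp.single 0 1 + Finsupp.single 1 1 := by
      ext i; fin_cases i <;> simp
    have h2 : (Finsupp.single 0 7 + Finsupp.single 1 1 - Finsupp.single 0 6 : Fin 2 →₀ ℕ) =
        Finsupp.single 0 1 + Finsupp.single 1 1 := by
      ext i; fin_cases i <;> simp
    simp [Finsupp.le_iff, h1, h2]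

theorem hs_rec (hr : 3 ≤ r) (m : ℕ) : hs r K (m + (r + 1)) = 2 * X 0 ^ 2 * hs r K (m + (r - 1)) +
    X 1 * hs r K (m + (r - 2)) +
      ((2 * (r - 3) : ℕ) : MvPolynomial (Fin 2) K) * X 0 ^ 4 * hs r K (m + (r - 3)) := by
  unfold hs
  rw [if_neg (by omega), if_neg (by omega), if_neg (by omega), if_neg (by omega),
    show m + (r + 1) - (r - 3) = m + 4 by omega, show m + (r - 1) - (r - 3) = m + 2 by omega,
    show m + (r - 2) - (r - 3) = m + 1 by omega, show m + (r - 3) - (r - 3) = m by omega]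
  rfl

theorem Phi_X_pow_mul (i : Fin r) (l : ℕ) (m : Fin r →₀ ℕ) (c : MvPolynomial (Fin 2) K) :
    Phi r K (X i ^ l * monomial m c) =
      hs r K (m i + l) * (c * ∏ j ∈ Finset.univ.erase i, hs r K (m j)) := by
  rw [X_pow_eq_monomial, monomial_mul, one_mul, Phi_monomial,
    ← Finset.mul_prod_erase _ _ (Finset.mem_univ i)]
  have : ∏ j ∈ Finset.univ.erase i, hs r K ((Finsupp.single i l + m) j) =
      ∏ j ∈ Finset.univ.erase i, hs r K (m j) := by
    refine Finset.prod_congr rfl fun j hj => ?_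
    simp [(Finset.ne_of_mem_erase hj).symm]
  rw [this]
  simp [add_comm l]
  ring

/-- The polynomial with root `yᵢ` modulo the kernel of the functional, evaluated at `t`. -/
def pval (r : ℕ) {R : Type*} [CommRing R] (w z t : R) : R :=
  t ^ (r + 1) - 2 * w ^ 2 * t ^ (r - 1) - z * t ^ (r - 2) -
    ((2 * (r - 3) : ℕ) : R) * w ^ 4 * t ^ (r - 3)

variable (r K) in
/-- The element `w`. -/
abbrev wv : MvPolynomial (Fin r) (MvPolynomial (Fin 2) K) := C (X 0)

variable (r K) in
/-- The element `z`. -/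
abbrev zv : MvPolynomial (Fin r) (MvPolynomial (Fin 2) K) := C (X 1)

theorem Phi_pval_mul (hr : 3 ≤ r) (i : Fin r) (G : MvPolynomial (Fin r) (MvPolynomial (Fin 2) K)) :
    Phi r K (pval r (wv r K) (zv r K) (X i) * G) = 0 := by
  induction G using MvPolynomial.induction_on' with
  | monomial m c =>
    have : pval r (wv r K) (zv r K) (X i) * monomial m c =
        X i ^ (r + 1) * monomial m c - C (2 * X 0 ^ 2) * (X i ^ (r - 1) * monomial m c) -
        C (X 1) * (X i ^ (r - 2) * monomial m c) -
        C (((2 * (r - 3) : ℕ) : MvPolynomial (Fin 2) K) * X 0 ^ 4) *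
          (X i ^ (r - 3) * monomial m c) := by
      simp only [pval, map_mul, map_pow, map_ofNat, map_natCast]
      ring
    rw [this]
    simp only [map_sub, Phi_C_mul, Phi_X_pow_mul]
    rw [hs_rec hr]
    ring
  | add p q hp hq => rw [mul_add, map_add, hp, hq, add_zero]

variable (r K) in
/-- The ideal of all polynomials annihilated by the functional together with all multiples. -/
def killI : Ideal (MvPolynomial (Fin r) (MvPolynomial (Fin 2) K)) where
  carrier := {F | ∀ G, lam r K (Phi r K (F * G * vand r K)) = 0}
  add_mem' := fun {a b} ha hb G => by simp only [add_mul, map_add, ha G, hb G, add_zero]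
  zero_mem' := fun G => by simp
  smul_mem' := fun c F hF G => by
    have := hF (c * G)
    rwa [smul_eq_mul, show c * F * G = F * (c * G) by ring]

theorem C_mem_killI {c : MvPolynomial (Fin 2) K} (h : ∀ F, lam r K (c * F) = 0) :
    C c ∈ killI r K := fun G => by
  rw [mul_assoc, Phi_C_mul, h]

/-- Cramer's rule: if a polynomial of degree `< r` agrees at all `yᵢ` with the characteristic
polynomial of the recurrence, then its coefficients lie in the ideal. -/
theorem coeff_mem_killI (hr : 3 ≤ r) (c : Fin r → MvPolynomial (Fin r) (MvPolynomial (Fin 2) K))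
    (h : ∀ i, ∑ j : Fin r, c j * X i ^ (j : ℕ) = pval r (wv r K) (zv r K) (X i)) (j : Fin r) :
    c j ∈ killI r K := by
  intro G
  set M : Matrix (Fin r) (Fin r) (MvPolynomial (Fin r) (MvPolynomial (Fin 2) K)) :=
    Matrix.of fun j i : Fin r => X i ^ (j : ℕ) with hM
  have h1 : Matrix.vecMul c M = fun i => pval r (wv r K) (zv r K) (X i) := by
    ext1 i
    rw [← h i]
    rfl
  have h2 : Matrix.vecMul (Matrix.vecMul c M) M.adjugate = M.det • c := by
    rw [Matrix.vecMul_vecMul, Matrix.mul_adjugate, Matrix.vecMul_smul, Matrix.vecMul_one]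
  have h3 : M.det * c j = ∑ i, pval r (wv r K) (zv r K) (X i) * M.adjugate i j := by
    rw [h1] at h2
    exact (congrFun h2 j).symm
  have h4 : c j * G * vand r K = ∑ i, pval r (wv r K) (zv r K) (X i) * (M.adjugate i j * G) := by
    rw [show c j * G * vand r K = (M.det * c j) * G by rw [vand]; ring, h3, Finset.sum_mul]
    exact Finset.sum_congr rfl fun i _ => by ring
  rw [h4, map_sum, Finset.sum_eq_zero, map_zero]
  exact fun i _ => Phi_pval_mul hr i _

end Kill

end SpinLef

namespace SpinLef

section Kill

variable {K : Type*} [CommRing K]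

theorem mem4 : ∃ I : Ideal (MvPolynomial (Fin 3) (MvPolynomial (Fin 2) K)), I = killI 3 K ∧
    wv 3 K ^ 4 ∈ I ∧ zv 3 K ^ 2 ∈ I ∧
    ∀ a b c s : MvPolynomial (Fin 3) (MvPolynomial (Fin 2) K), a = X 0 → b = X 1 → c = X 2 →
      s = a + b + c → -2 * wv 3 K ^ 2 - (a * b + a * c + b * c - (a + b + c) * s) ∈ I ∧
      a * b * c - (a * b + a * c + b * c) * s - zv 3 K ∈ I ∧
      a * b * c * s ∈ I := by
  refine ⟨_, rfl, ?_, ?_, ?_⟩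
  · rw [wv, ← map_pow]
    exact C_mem_killI (lam_pow_mul (r := 3))
  · rw [zv, ← map_pow]
    refine C_mem_killI fun F => ?_
    have := lam_rel_mul (r := 3) (Or.inl rfl) F
    simpa using this
  · rintro a b c s rfl rfl rfl hs
    have h := coeff_mem_killI (K := K) (r := 3) le_rfl
      ![X 0 * X 1 * X 2 * s, X 0 * X 1 * X 2 - (X 0 * X 1 + X 0 * X 2 + X 1 * X 2) * s - zv 3 K,
        -2 * wv 3 K ^ 2 - (X 0 * X 1 + X 0 * X 2 + X 1 * X 2 - (X 0 + X 1 + X 2) * s)] (by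
        intro i
        subst hs
        fin_cases i <;> simp [Fin.sum_univ_succ, pval] <;> ring)
    exact ⟨h 2, h 1, h 0⟩

theorem mem5 : ∃ I : Ideal (MvPolynomial (Fin 4) (MvPolynomial (Fin 2) K)), I = killI 4 K ∧
    wv 4 K ^ 8 ∈ I ∧ zv 4 K ^ 2 - 8 * wv 4 K ^ 6 ∈ I ∧
    ∀ a b c d s : MvPolynomial (Fin 4) (MvPolynomial (Fin 2) K), a = X 0 → b = X 1 → c = X 2 →
      d = X 3 → s = a + b + c + d →
      -2 * wv 4 K ^ 2 - (a * b + a * c + a * d + b * c + b * d + c * d - s * s) ∈ I ∧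
      (a * b * c + a * b * d + a * c * d + b * c * d -
        (a * b + a * c + a * d + b * c + b * d + c * d) * s) - zv 4 K ∈ I ∧
      -2 * wv 4 K ^ 4 - (a * b * c * d -
        (a * b * c + a * b * d + a * c * d + b * c * d) * s) ∈ I ∧
      a * b * c * d * s ∈ I := by
  refine ⟨_, rfl, ?_, ?_, ?_⟩
  · rw [wv, ← map_pow]
    exact C_mem_killI (lam_pow_mul (r := 4))
  · have e : zv 4 K ^ 2 - 8 * wv 4 K ^ 6 = C (X 1 ^ 2 - 8 * X 0 ^ 6) := by
      rw [map_sub, map_mul, map_pow, map_pow, map_ofNat]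
    rw [e]
    refine C_mem_killI fun F => ?_
    have := lam_rel_mul (r := 4) (Or.inr rfl) F
    simpa using this
  · rintro a b c d s rfl rfl rfl rfl hs
    have h := coeff_mem_killI (K := K) (r := 4) (by norm_num)
      ![-(X 0 * X 1 * X 2 * X 3 * s), -2 * wv 4 K ^ 4 - (X 0 * X 1 * X 2 * X 3 -
          (X 0 * X 1 * X 2 + X 0 * X 1 * X 3 + X 0 * X 2 * X 3 + X 1 * X 2 * X 3) * s),
        (X 0 * X 1 * X 2 + X 0 * X 1 * X 3 + X 0 * X 2 * X 3 + X 1 * X 2 * X 3 -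
          (X 0 * X 1 + X 0 * X 2 + X 0 * X 3 + X 1 * X 2 + X 1 * X 3 + X 2 * X 3) * s) - zv 4 K,
        -2 * wv 4 K ^ 2 - (X 0 * X 1 + X 0 * X 2 + X 0 * X 3 + X 1 * X 2 + X 1 * X 3 + X 2 * X 3
          - s * s)] (by
        intro i
        subst hs
        fin_cases i <;> simp [Fin.sum_univ_succ, pval] <;> ring)
    exact ⟨h 3, h 2, h 1, neg_mem_iff.1 (h 0)⟩

end Kill

end SpinLef

namespace SpinLef

theorem sSum4 : sSum 4 = X 1 + X 2 + X 3 := by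
  rw [sSum, show (univ.filter fun i : Fin 4 => i.val ≠ 0) = {1, 2, 3} by decide]
  simp +decide [Finset.sum_insert]
  ring

theorem sSum5 : sSum 5 = X 1 + X 2 + X 3 + X 4 := by
  rw [sSum, show (univ.filter fun i : Fin 5 => i.val ≠ 0) = {1, 2, 3, 4} by decide]
  simp +decide [Finset.sum_insert]
  ring

theorem argsA4 : argsA 4 = ![X 1 ^ 2, X 2 ^ 2, X 3 ^ 2, (X 1 + X 2 + X 3) ^ 2] := by
  ext1 i
  rw [argsA, sSum4]
  fin_cases i <;> rfl

theorem argsA5 : argsA 5 = ![X 1 ^ 2, X 2 ^ 2, X 3 ^ 2, X 4 ^ 2, (X 1 + X 2 + X 3 + X 4) ^ 2] := by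
  ext1 i
  rw [argsA, sSum5]
  fin_cases i <;> rfl

/-- The relations in terms of the elementary symmetric polynomials `e₂, e₃, e₄` of
`y₁, y₂, y₃, -s`. -/
theorem rel4 {R : Type*} [CommRing R] (f : MvPolynomial (Fin 4) ℝ →+* R) (a b c s e2 e3 e4 : R)
    (ha : f (X 1) = a) (hb : f (X 2) = b) (hc : f (X 3) = c) (hs : s = a + b + c)
    (h2 : e2 = a * b + a * c + b * c - (a + b + c) * s)
    (h3 : e3 = a * b * c - (a * b + a * c + b * c) * s) (h4 : e4 = -(a * b * c * s)) :
    f (rel2 4 0) = f (X 0) ^ 2 + 2 * e2 ∧ f (rel2 4 1) = -(e2 ^ 2 + 2 * e4) ∧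
      f (rel2 4 2) = -(e3 ^ 2 - 2 * e2 * e4) ∧ f (rel2 4 3) = -e4 := by
  subst h2 h3 h4 hs ha hb hc
  refine ⟨?_, ?_, ?_, ?_⟩
  · rw [rel2, if_pos (by decide), (esymm4 _).1, argsA4]
    simp only [Matrix.cons_val, map_add, map_sub, map_mul, map_pow]
    rw [show f (X ⟨0, (0 : Fin 4).pos⟩) = f (X 0) from rfl]
    ring
  · rw [rel2, if_neg (by decide), if_neg (by decide)]
    change f (-esymmOf 2 _) = _
    rw [(esymm4 _).2.1, argsA4]
    simp only [Matrix.cons_val, map_add, map_neg, map_mul, map_pow]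
    ring
  · rw [rel2, if_neg (by decide), if_neg (by decide)]
    change f (-esymmOf 3 _) = _
    rw [(esymm4 _).2.2, argsA4]
    simp only [Matrix.cons_val, map_add, map_neg, map_mul, map_pow]
    ring
  · rw [rel2, if_neg (by decide), if_pos (by decide), sSum4,
      show (univ.filter fun i : Fin 4 => i.val ≠ 0) = {1, 2, 3} by decide]
    simp +decide [Finset.prod_insert]
    ring

/-- The relations in terms of the elementary symmetric polynomials `e₂, …, e₅` of
`y₁, y₂, y₃, y₄, -s`. -/
theorem rel5 {R : Type*} [CommRing R] (f : MvPolynomial (Fin 5) ℝ →+* R)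
    (a b c d s e2 e3 e4 e5 : R)
    (ha : f (X 1) = a) (hb : f (X 2) = b) (hc : f (X 3) = c) (hd : f (X 4) = d)
    (hs : s = a + b + c + d)
    (h2 : e2 = a * b + a * c + a * d + b * c + b * d + c * d - s * s)
    (h3 : e3 = a * b * c + a * b * d + a * c * d + b * c * d -
      (a * b + a * c + a * d + b * c + b * d + c * d) * s)
    (h4 : e4 = a * b * c * d - (a * b * c + a * b * d + a * c * d + b * c * d) * s)
    (h5 : e5 = -(a * b * c * d * s)) :
    f (rel2 5 0) = f (X 0) ^ 2 + 2 * e2 ∧ f (rel2 5 1) = -(e2 ^ 2 + 2 * e4) ∧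
      f (rel2 5 2) = -(e3 ^ 2 - 2 * e2 * e4) ∧ f (rel2 5 3) = -(e4 ^ 2 - 2 * e3 * e5) ∧
      f (rel2 5 4) = -e5 := by
  subst h2 h3 h4 h5 hs ha hb hc hd
  refine ⟨?_, ?_, ?_, ?_, ?_⟩
  · rw [rel2, if_pos (by decide), (esymm5 _).1, argsA5]
    simp only [Matrix.cons_val, map_add, map_sub, map_mul, map_pow]
    rw [show f (X ⟨0, (0 : Fin 5).pos⟩) = f (X 0) from rfl]
    ring
  · rw [rel2, if_neg (by decide), if_neg (by decide)]
    change f (-esymmOf 2 _) = _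
    rw [(esymm5 _).2.1, argsA5]
    simp only [Matrix.cons_val, map_add, map_neg, map_mul, map_pow]
    ring
  · rw [rel2, if_neg (by decide), if_neg (by decide)]
    change f (-esymmOf 3 _) = _
    rw [(esymm5 _).2.2.1, argsA5]
    simp only [Matrix.cons_val, map_add, map_neg, map_mul, map_pow]
    ring
  · rw [rel2, if_neg (by decide), if_neg (by decide)]
    change f (-esymmOf 4 _) = _
    rw [(esymm5 _).2.2.2, argsA5]
    simp only [Matrix.cons_val, map_add, map_neg, map_mul, map_pow]
    ring
  · rw [rel2, if_neg (by decide), if_pos (by decide), sSum5,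
      show (univ.filter fun i : Fin 5 => i.val ≠ 0) = {1, 2, 3, 4} by decide]
    simp +decide [Finset.prod_insert]
    ring

/-- The functional vanishes on the ideal of relations for `n = 4`. -/
theorem phi_eq_zero4 (F : MvPolynomial (Fin 4) ℝ) (hF : F ∈ Ideal.span (Set.range (rel2 4))) :
    phi 3 ℝ F = 0 := by
  obtain ⟨I, hI, hw, hz, hm⟩ := mem4 (K := ℝ)
  obtain ⟨m2, m3, m4⟩ := hm _ _ _ _ rfl rfl rfl rfl
  have hle : Ideal.span (Set.range (rel2 4)) ≤ I.comap (sub 3 ℝ).toRingHom := by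
    rw [Ideal.span_le]
    rintro _ ⟨j, rfl⟩
    obtain ⟨r0, r1, r2, r3⟩ := rel4 (sub 3 ℝ).toRingHom _ _ _ _ _ _ _ (sub_X_succ 0)
      (sub_X_succ 1) (sub_X_succ 2) rfl rfl rfl rfl
    have hx : (sub 3 ℝ).toRingHom (X 0) = 2 * wv 3 ℝ := by
      refine (sub_X_zero (r := 3)).trans ?_
      rw [map_mul, map_ofNat]
    rw [hx] at r0
    rw [SetLike.mem_coe, Ideal.mem_comap]
    set E2 : MvPolynomial (Fin 3) (MvPolynomial (Fin 2) ℝ) :=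
      X 0 * X 1 + X 0 * X 2 + X 1 * X 2 - (X 0 + X 1 + X 2) * (X 0 + X 1 + X 2)
    set E3 : MvPolynomial (Fin 3) (MvPolynomial (Fin 2) ℝ) :=
      X 0 * X 1 * X 2 - (X 0 * X 1 + X 0 * X 2 + X 1 * X 2) * (X 0 + X 1 + X 2)
    set E4 : MvPolynomial (Fin 3) (MvPolynomial (Fin 2) ℝ) :=
      X 0 * X 1 * X 2 * (X 0 + X 1 + X 2)
    fin_cases j
    · change (sub 3 ℝ).toRingHom (rel2 4 0) ∈ I
      rw [r0, show (2 * wv 3 ℝ) ^ 2 + 2 * E2 = (-2) * (-2 * wv 3 ℝ ^ 2 - E2) by ring]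
      exact I.mul_mem_left _ m2
    · change (sub 3 ℝ).toRingHom (rel2 4 1) ∈ I
      rw [r1, show -(E2 ^ 2 + 2 * -E4) = (E2 - 2 * wv 3 ℝ ^ 2) * (-2 * wv 3 ℝ ^ 2 - E2) +
        2 * E4 + (-4) * wv 3 ℝ ^ 4 by ring]
      exact I.add_mem (I.add_mem (I.mul_mem_left _ m2) (I.mul_mem_left _ m4)) (I.mul_mem_left _ hw)
    · change (sub 3 ℝ).toRingHom (rel2 4 2) ∈ I
      rw [r2, show -(E3 ^ 2 - 2 * E2 * -E4) = -(E3 + zv 3 ℝ) * (E3 - zv 3 ℝ) + (-2 * E2) * E4 +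
        (-1) * zv 3 ℝ ^ 2 by ring]
      exact I.add_mem (I.add_mem (I.mul_mem_left _ m3) (I.mul_mem_left _ m4)) (I.mul_mem_left _ hz)
    · change (sub 3 ℝ).toRingHom (rel2 4 3) ∈ I
      rw [r3, neg_neg]
      exact m4
  have := hle hF
  rw [hI] at this
  have := this 1
  rwa [mul_one] at this

/-- The functional vanishes on the ideal of relations for `n = 5`. -/
theorem phi_eq_zero5 (F : MvPolynomial (Fin 5) ℝ) (hF : F ∈ Ideal.span (Set.range (rel2 5))) :
    phi 4 ℝ F = 0 := by
  obtain ⟨I, hI, hw, hz, hm⟩ := mem5 (K := ℝ)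
  obtain ⟨m2, m3, m4, m5⟩ := hm _ _ _ _ _ rfl rfl rfl rfl rfl
  have hle : Ideal.span (Set.range (rel2 5)) ≤ I.comap (sub 4 ℝ).toRingHom := by
    rw [Ideal.span_le]
    rintro _ ⟨j, rfl⟩
    obtain ⟨r0, r1, r2, r3, r4⟩ := rel5 (sub 4 ℝ).toRingHom _ _ _ _ _ _ _ _ _ (sub_X_succ 0)
      (sub_X_succ 1) (sub_X_succ 2) (sub_X_succ 3) rfl rfl rfl rfl rfl
    have hx : (sub 4 ℝ).toRingHom (X 0) = 2 * wv 4 ℝ := by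
      refine (sub_X_zero (r := 4)).trans ?_
      rw [map_mul, map_ofNat]
    rw [hx] at r0
    rw [SetLike.mem_coe, Ideal.mem_comap]
    set E2 : MvPolynomial (Fin 4) (MvPolynomial (Fin 2) ℝ) :=
      X 0 * X 1 + X 0 * X 2 + X 0 * X 3 + X 1 * X 2 + X 1 * X 3 + X 2 * X 3 -
        (X 0 + X 1 + X 2 + X 3) * (X 0 + X 1 + X 2 + X 3)
    set E3 : MvPolynomial (Fin 4) (MvPolynomial (Fin 2) ℝ) :=
      X 0 * X 1 * X 2 + X 0 * X 1 * X 3 + X 0 * X 2 * X 3 + X 1 * X 2 * X 3 -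
        (X 0 * X 1 + X 0 * X 2 + X 0 * X 3 + X 1 * X 2 + X 1 * X 3 + X 2 * X 3) *
          (X 0 + X 1 + X 2 + X 3)
    set E4 : MvPolynomial (Fin 4) (MvPolynomial (Fin 2) ℝ) :=
      X 0 * X 1 * X 2 * X 3 -
        (X 0 * X 1 * X 2 + X 0 * X 1 * X 3 + X 0 * X 2 * X 3 + X 1 * X 2 * X 3) *
          (X 0 + X 1 + X 2 + X 3)
    set E5 : MvPolynomial (Fin 4) (MvPolynomial (Fin 2) ℝ) :=
      X 0 * X 1 * X 2 * X 3 * (X 0 + X 1 + X 2 + X 3)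
    generalize wv 4 ℝ = w at *
    generalize zv 4 ℝ = z at *
    fin_cases j
    · change (sub 4 ℝ).toRingHom (rel2 5 0) ∈ I
      rw [r0, show (2 * w) ^ 2 + 2 * E2 = (-2) * (-2 * w ^ 2 - E2) by ring]
      exact I.mul_mem_left _ m2
    · change (sub 4 ℝ).toRingHom (rel2 5 1) ∈ I
      rw [r1, show -(E2 ^ 2 + 2 * E4) = (E2 - 2 * w ^ 2) * (-2 * w ^ 2 - E2) +
        2 * (-2 * w ^ 4 - E4) by ring]
      exact I.add_mem (I.mul_mem_left _ m2) (I.mul_mem_left _ m4)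
    · change (sub 4 ℝ).toRingHom (rel2 5 2) ∈ I
      rw [r2, show -(E3 ^ 2 - 2 * E2 * E4) = -(E3 + z) * (E3 - z) +
        (-1) * (z ^ 2 - 8 * w ^ 6) + (-2 * E4) * (-2 * w ^ 2 - E2) +
        (4 * w ^ 2) * (-2 * w ^ 4 - E4) by ring]
      exact I.add_mem (I.add_mem (I.add_mem (I.mul_mem_left _ m3) (I.mul_mem_left _ hz))
        (I.mul_mem_left _ m2)) (I.mul_mem_left _ m4)
    · change (sub 4 ℝ).toRingHom (rel2 5 3) ∈ I
      rw [r3, show -(E4 ^ 2 - 2 * E3 * -E5) = (E4 - 2 * w ^ 4) * (-2 * w ^ 4 - E4) +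
        (-4) * w ^ 8 + (-2 * E3) * E5 by ring]
      exact I.add_mem (I.add_mem (I.mul_mem_left _ m4) (I.mul_mem_left _ hw)) (I.mul_mem_left _ m5)
    · change (sub 4 ℝ).toRingHom (rel2 5 4) ∈ I
      rw [r4, neg_neg]
      exact m5
  have := hle hF
  rw [hI] at this
  have := this 1
  rwa [mul_one] at this

end SpinLef

/-! ### Moments as determinants -/

namespace SpinLef

section Moment

variable {r : ℕ} {K : Type*} [CommRing K]

variable (r K) in
/-- The class `x₁ + 2 x₂ + ⋯ + (r + 1) x_{r+1}` over an arbitrary ring. -/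
def om : MvPolynomial (Fin (r + 1)) K := ∑ i : Fin (r + 1), C (((i : ℕ) + 1 : ℕ) : K) * X i

variable (K) in
/-- The moment `φ(ω ^ k * y ^ α)`. -/
def moment (k : ℕ) (α : Fin r → ℕ) : K := phi r K (om r K ^ k * ∏ i : Fin r, X i.succ ^ α i)

theorem phi_term_eq_zero (hr : r = 3 ∨ r = 4) (c : K) (f : Fin (r + 1) → ℕ) (α : Fin r → ℕ)
    (h : ∑ i, f i + ∑ i, α i ≠ r * (r + 1)) :
    phi r K (C c * (∏ i, X i ^ f i) * ∏ i : Fin r, X i.succ ^ α i) = 0 := by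
  set g : Fin (r + 1) → ℕ := Fin.cons 0 α
  have hg : (∏ i : Fin r, X i.succ ^ α i : MvPolynomial (Fin (r + 1)) K) = ∏ i, X i ^ g i := by
    rw [Fin.prod_univ_succ]; simp [g]
  have hs : ∑ i, α i = ∑ i, g i := by rw [Fin.sum_univ_succ]; simp [g]
  have : C c * (∏ i, X i ^ f i) * ∏ i, X i ^ g i =
      monomial (Finsupp.equivFunOnFinite.symm (f + g)) c := by
    rw [monomial_eq, Finsupp.prod_fintype _ _ (by simp), mul_assoc, ← Finset.prod_mul_distrib]
    simp [pow_add]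
  rw [hg, this]
  refine phi_monomial_eq_zero hr _ _ ?_
  rw [hs, ← Finset.sum_add_distrib] at h
  simpa using h

/-- The moments as determinants: `ω ^ k / k!` is the component of degree `k` of a product of
truncated exponential series, and the functional only sees the component of one degree. The
numbers `ε t` are the inverse factorials. -/
theorem moment_eq (hr : r = 3 ∨ r = 4) (ε : ℕ → K) (hε : ∀ t < 21, ε t * (t.factorial : K) = 1)
    (k : ℕ) (α : Fin r → ℕ) (hk : k + ∑ i, α i = r * (r + 1)) :
    moment K k α = (k.factorial : K) * lam r K ((∑ t ∈ range 21, C (ε t) * (2 * X 0) ^ t) *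
      Matrix.det (Matrix.of fun j i : Fin r => ∑ t ∈ range 21,
        C (ε t * (((i : ℕ) + 2 : ℕ) : K) ^ t) * hs r K (t + α i + j))) := by
  have hk21 : k < 21 := by obtain rfl | rfl := hr <;> omega
  set P : MvPolynomial (Fin (r + 1)) K :=
    ∏ i : Fin (r + 1), ∑ t ∈ range 21, C (ε t * (((i : ℕ) + 1 : ℕ) : K) ^ t) * X i ^ t with hP
  set Y : MvPolynomial (Fin (r + 1)) K := ∏ i : Fin r, X i.succ ^ α i with hY
  have h1 : phi r K (P * Y) = lam r K ((∑ t ∈ range 21, C (ε t) * (2 * X 0) ^ t) *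
      Matrix.det (Matrix.of fun j i : Fin r => ∑ t ∈ range 21,
        C (ε t * (((i : ℕ) + 2 : ℕ) : K) ^ t) * hs r K (t + α i + j))) := by
    rw [phi_apply]
    congr 1
    rw [← Phi_prod_vand (range 21) (fun i t => C (ε t * (((i : ℕ) + 2 : ℕ) : K) ^ t))
      (fun i t => t + α i), ← Phi_C_mul]
    congr 1
    rw [← mul_assoc]
    congr 1
    rw [map_mul (sub r K), hP, Fin.prod_univ_succ, map_mul (sub r K), hY, map_prod, map_prod,
      mul_assoc, ← Finset.prod_mul_distrib]
    congr 1
    · simp [sub_X_zero]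
    · refine Finset.prod_congr rfl fun i _ => ?_
      rw [map_sum, Finset.sum_mul]
      refine Finset.sum_congr rfl fun t _ => ?_
      rw [map_mul (sub r K), map_pow, map_pow, sub_X_succ, sub_C, Fin.val_succ, pow_add, mul_assoc]
  rw [← h1, moment, om, ← hY, Finset.sum_pow_eq_sum_piAntidiag, hP, Finset.prod_univ_sum,
    Finset.sum_mul, Finset.sum_mul, map_sum, map_sum, Finset.mul_sum]
  have hterm : ∀ f : Fin (r + 1) → ℕ, ∏ i, (C (ε (f i) * (((i : ℕ) + 1 : ℕ) : K) ^ f i) *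
      X i ^ f i : MvPolynomial (Fin (r + 1)) K) =
      C (∏ i, ε (f i) * (((i : ℕ) + 1 : ℕ) : K) ^ f i) * ∏ i, X i ^ f i := by
    intro f
    rw [Finset.prod_mul_distrib, map_prod]
  refine (Finset.sum_subset_zero_on_sdiff ?_ ?_ ?_)
  · intro f hf
    rw [Finset.mem_piAntidiag] at hf
    rw [Fintype.mem_piFinset]
    intro i
    have := (Finset.single_le_sum (f := f) (fun _ _ => Nat.zero_le _)
      (Finset.mem_univ i)).trans_eq hf.1
    rw [Finset.mem_range]
    omega
  · intro f hf
    rw [Finset.mem_sdiff, Finset.mem_piAntidiag] at hf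
    rw [hterm, phi_term_eq_zero hr, mul_zero]
    have : ∑ i, f i ≠ k := fun h => hf.2 ⟨h, fun _ _ => Finset.mem_univ _⟩
    omega
  · intro f hf
    rw [Finset.mem_piAntidiag] at hf
    have hlt : ∀ i, f i < 21 := fun i => by
      have := (Finset.single_le_sum (f := f) (fun _ _ => Nat.zero_le _)
        (Finset.mem_univ i)).trans_eq hf.1
      omega
    have hm := Nat.multinomial_spec Finset.univ f
    rw [hf.1] at hm
    have hm' : (Nat.multinomial Finset.univ f : K) = k.factorial * ∏ i, ε (f i) := by
      rw [← hm]
      push_cast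
      rw [mul_right_comm, ← Finset.prod_mul_distrib, Finset.prod_congr rfl (g := fun _ => (1 : K))
        (fun i _ => by rw [mul_comm, hε _ (hlt i)])]
      simp
    have e : (Nat.multinomial Finset.univ f : MvPolynomial (Fin (r + 1)) K) *
        ∏ i : Fin (r + 1), (C (((i : ℕ) + 1 : ℕ) : K) * X i) ^ f i =
        C (k.factorial : K) *
          ∏ i, (C (ε (f i) * (((i : ℕ) + 1 : ℕ) : K) ^ f i) * X i ^ f i) := by
      have hC : (C (∏ i, ε (f i) * (((i : ℕ) + 1 : ℕ) : K) ^ f i) :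
          MvPolynomial (Fin (r + 1)) K) = C (∏ i, ε (f i)) *
            ∏ i : Fin (r + 1), C (((i : ℕ) + 1 : ℕ) : K) ^ f i := by
        rw [Finset.prod_mul_distrib, map_mul, map_prod C (fun i => _ ^ _)]
        simp only [map_pow]
      rw [hterm, hC, ← map_natCast (C : K →+* MvPolynomial (Fin (r + 1)) K) (Nat.multinomial _ _),
        hm', map_mul]
      simp_rw [mul_pow]
      rw [Finset.prod_mul_distrib]
      ring
    rw [e, mul_assoc, ← smul_eq_C_mul, map_smul, smul_eq_mul]

theorem moment_map {L : Type*} [CommRing L] (f : K →+* L) (k : ℕ) (α : Fin r → ℕ) :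
    moment L k α = f (moment K k α) := by
  rw [moment, moment, ← phi_map]
  congr 1
  simp [om]

end Moment

end SpinLef

/-! ### The tables compute the moments modulo 103 -/

namespace SpinLef

section Quotient

instance : Fact (Nat.Prime 103) := ⟨by norm_num⟩

/-- The ideal `(w ^ 8, z ^ 2 - κ w ^ 6)` of `𝔽₁₀₃[w, z]`, where `κ = 8 (r - 3)`. -/
def J (r : ℕ) : Ideal (MvPolynomial (Fin 2) (ZMod 103)) :=
  Ideal.span {X 0 ^ 8, X 1 ^ 2 - ((8 * (r - 3) : ℕ) : MvPolynomial (Fin 2) (ZMod 103)) * X 0 ^ 6}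

/-- The projection modulo the ideal `J r`. -/
abbrev pr (r : ℕ) : MvPolynomial (Fin 2) (ZMod 103) →ₐ[ZMod 103]
    MvPolynomial (Fin 2) (ZMod 103) ⧸ J r := Ideal.Quotient.mkₐ (ZMod 103) (J r)

theorem pr_w (r : ℕ) : pr r (X 0) ^ 8 = 0 := by
  rw [← map_pow]
  exact Ideal.Quotient.eq_zero_iff_mem.2 (Ideal.subset_span (by simp))

theorem pr_z (r : ℕ) : pr r (X 1) ^ 2 = ((8 * (r - 3) : ℕ) : _) * pr r (X 0) ^ 6 := by
  rw [← map_pow, ← map_pow, ← map_natCast (pr r), ← map_mul, ← sub_eq_zero, ← map_sub]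
  exact Ideal.Quotient.eq_zero_iff_mem.2 (Ideal.subset_span (by simp))

theorem lam_J {r : ℕ} (hr : r = 3 ∨ r = 4) (F) (hF : F ∈ J r) : lam r (ZMod 103) F = 0 := by
  have hw : ∀ G, lam r (ZMod 103) (G * X 0 ^ 8) = 0 := fun G => by
    have := lam_pow_mul (r := r) (K := ZMod 103) (X 0 ^ (8 - (4 * r - 9 + 1)) * G)
    rwa [← mul_assoc, ← pow_add, show 4 * r - 9 + 1 + (8 - (4 * r - 9 + 1)) = 8 by
      obtain rfl | rfl := hr <;> rfl, mul_comm] at this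
  obtain ⟨a, b, rfl⟩ := Ideal.mem_span_pair.1 hF
  rw [map_add, hw, mul_comm b, lam_rel_mul hr, add_zero]

/-- The linear form `F ↦ λ (E * F)` factors through the quotient by `J r`. -/
theorem exists_form {r : ℕ} (hr : r = 3 ∨ r = 4) (E : MvPolynomial (Fin 2) (ZMod 103)) :
    ∃ ℓ : (MvPolynomial (Fin 2) (ZMod 103) ⧸ J r) →ₗ[ZMod 103] ZMod 103,
      ∀ F, ℓ (pr r F) = lam r (ZMod 103) (E * F) := by
  obtain ⟨g, hg⟩ := (pr r).toLinearMap.exists_rightInverse_of_surjective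
    (LinearMap.range_eq_top.2 (Ideal.Quotient.mkₐ_surjective (ZMod 103) (J r)))
  refine ⟨lam r (ZMod 103) ∘ₗ LinearMap.mulLeft (ZMod 103) E ∘ₗ g, fun F => ?_⟩
  have h : g (pr r F) - F ∈ J r := by
    rw [← Ideal.Quotient.eq_zero_iff_mem]
    have := LinearMap.congr_fun hg (pr r F)
    change pr r (g (pr r F)) = pr r F at this
    change pr r _ = 0
    rw [map_sub, this, sub_self]
  have := lam_J hr _ (Ideal.mul_mem_left _ E h)
  rw [mul_sub, map_sub, sub_eq_zero] at this
  exact this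

theorem lam_C_mul_pow {r : ℕ} {K : Type*} [CommRing K] (c : K) (a : ℕ) :
    lam r K (C c * X 0 ^ a) = 0 := by
  have : C c * (X 0 : MvPolynomial (Fin 2) K) ^ a = monomial (Finsupp.single 0 a) c := by
    rw [X_pow_eq_monomial, C_mul_monomial, mul_one]
  rw [this]
  have h1 : ∀ b d : ℕ, d ≠ 0 → ¬ (Finsupp.single (0 : Fin 2) a =
      Finsupp.single 0 b + Finsupp.single 1 d) := by
    intro b d hd h
    have := DFunLike.congr_fun h 1
    simp at this
    exact hd this.symm
  rw [lam, LinearMap.add_apply, LinearMap.smul_apply, lcoeff_apply, lcoeff_apply, coeff_monomial,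
    coeff_monomial, if_neg (h1 _ _ one_ne_zero), if_neg (h1 _ _ three_ne_zero), smul_zero, add_zero]

theorem lam_C_mul_pow_mul {r : ℕ} {K : Type*} [CommRing K] (c : K) (a : ℕ) :
    lam r K (C c * X 0 ^ a * X 1) = if a = 4 * r - 9 then c else 0 := by
  have : C c * (X 0 : MvPolynomial (Fin 2) K) ^ a * X 1 =
      monomial (Finsupp.single 0 a + Finsupp.single 1 1) c := by
    rw [X_pow_eq_monomial, C_mul_monomial, X, monomial_mul, mul_one, mul_one]
  rw [this]
  have h1 : ∀ b : ℕ, ¬ (Finsupp.single (0 : Fin 2) a + Finsupp.single 1 1 =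
      Finsupp.single 0 b + Finsupp.single 1 3) := by
    intro b h
    have := DFunLike.congr_fun h 1
    simp at this
  have h2 : ∀ b : ℕ, (Finsupp.single (0 : Fin 2) a + Finsupp.single 1 1 =
      Finsupp.single 0 b + Finsupp.single 1 1) ↔ a = b := by
    intro b
    rw [add_left_inj]
    exact (Finsupp.single_injective 0).eq_iff
  rw [lam, LinearMap.add_apply, LinearMap.smul_apply, lcoeff_apply, lcoeff_apply, coeff_monomial,
    coeff_monomial, if_neg (h1 _), smul_zero, add_zero]
  simp only [h2]

/-- The truncated exponential of `2 w`, with coefficients `ε t`. -/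
def expw {K : Type*} [CommRing K] (ε : ℕ → K) : MvPolynomial (Fin 2) K :=
  ∑ t ∈ range 21, C (ε t) * (2 * X 0) ^ t

theorem lam_expw_pow {K : Type*} [CommRing K] (r : ℕ) (ε : ℕ → K) (a : ℕ) :
    lam r K (expw ε * X 0 ^ a) = 0 := by
  rw [expw, Finset.sum_mul, map_sum]
  refine Finset.sum_eq_zero fun t _ => ?_
  rw [mul_pow, mul_assoc, mul_assoc, ← pow_add, ← mul_assoc,
    show (2 : MvPolynomial (Fin 2) K) = C 2 by rw [map_ofNat], ← map_pow, ← map_mul,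
    lam_C_mul_pow]

theorem lam_expw_pow_mul {K : Type*} [CommRing K] (r : ℕ) (hr : 4 * r - 9 < 21) (ε : ℕ → K)
    (a : ℕ) : lam r K (expw ε * (X 1 * X 0 ^ a)) =
      if a ≤ 4 * r - 9 then ε (4 * r - 9 - a) * 2 ^ (4 * r - 9 - a) else 0 := by
  rw [expw, Finset.sum_mul, map_sum]
  have : ∀ t ∈ range 21, lam r K (C (ε t) * (2 * X 0) ^ t * (X 1 * X 0 ^ a)) =
      if t + a = 4 * r - 9 then ε t * 2 ^ t else 0 := by
    intro t _
    rw [← lam_C_mul_pow_mul]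
    congr 1
    rw [map_mul, map_pow, show (C (2 : K) : MvPolynomial (Fin 2) K) = 2 by rw [map_ofNat]]
    ring
  rw [Finset.sum_congr rfl this]
  split_ifs with h
  · rw [Finset.sum_eq_single (4 * r - 9 - a), if_pos (by omega)]
    · intro b _ hb
      rw [if_neg (by omega)]
    · intro hb
      rw [Finset.mem_range] at hb
      omega
  · exact Finset.sum_eq_zero fun t _ => if_neg (by omega)

end Quotient

section Dot

variable {r κ : ℕ} {w0 w1 w2 w3 : ℕ}

/-- The Laplace expansion of a `4 × 4` determinant along its first two rows, as a dot product of
coded lists. -/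
theorem dot_det {Q : Type*} [CommRing Q] {w z : Q} (hQ : (103 : Q) = 0) (hw : w ^ 8 = 0)
    (hz : z ^ 2 = κ * w ^ 6) [Algebra (ZMod 103) Q] (ℓ : Q →ₗ[ZMod 103] ZMod 103)
    (h0 : ℓ z = w0) (h1 : ℓ (z * w ^ 2) = w1) (h2 : ℓ (z * w ^ 4) = w2)
    (h3 : ℓ (z * w ^ 6) = w3) (h0' : ℓ 1 = 0) (h1' : ℓ (w ^ 2) = 0) (h2' : ℓ (w ^ 4) = 0)
    (h3' : ℓ (w ^ 6) = 0) (A B C D : List C8) (a : Fin 4 → ℕ) (M : Matrix (Fin 4) (Fin 4) Q)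
    (hA : ∀ j : Fin 4, (get A (a 0 + j)).val w z = M 0 j)
    (hB : ∀ j : Fin 4, (get B (a 1 + j)).val w z = M 1 j)
    (hC : ∀ j : Fin 4, (get C (a 2 + j)).val w z = M 2 j)
    (hD : ∀ j : Fin 4, (get D (a 3 + j)).val w z = M 3 j) :
    (dot (ulist κ A B (a 0) (a 1)) (vlist κ w0 w1 w2 w3 C D (a 2) (a 3)) : ZMod 103) =
      ℓ M.det := by
  have e1 : ∀ j k : Fin 4, (ulist.mlist κ A B (a 0) (a 1) j k).val w z =
      M 0 j * M 1 k - M 0 k * M 1 j := fun j k => by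
    rw [ulist.mlist, C8.val_minor hQ κ hw hz, hA, hA, hB, hB]
  have e2 : ∀ j k : Fin 4, (ulist.mlist κ C D (a 2) (a 3) j k).val w z =
      M 2 j * M 3 k - M 2 k * M 3 j := fun j k => by
    rw [ulist.mlist, C8.val_minor hQ κ hw hz, hC, hC, hD, hD]
  have e := fun x y => C8.dot_dual hQ κ hw hz ℓ w0 w1 w2 w3 h0 h1 h2 h3 h0' h1' h2' h3' x y
  have l : ∀ x y : C8, x.toL.length = (y.dual w0 w1 w2 w3).length := fun x y => by
    rw [length_toL, length_dual]
  rw [ulist, vlist]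
  simp only [dot_append _ _ _ _ (l _ _), Nat.cast_add, e]
  rw [det_four]
  simp only [map_add]
  have f1 := e1 0 1
  have f2 := e1 0 2
  have f3 := e1 0 3
  have f4 := e1 1 2
  have f5 := e1 1 3
  have f6 := e1 2 3
  have g1 := e2 2 3
  have g2 := e2 3 1
  have g3 := e2 1 2
  have g4 := e2 0 3
  have g5 := e2 2 0
  have g6 := e2 0 1
  simp only [show ((0 : Fin 4) : ℕ) = 0 from rfl, show ((1 : Fin 4) : ℕ) = 1 from rfl,
    show ((2 : Fin 4) : ℕ) = 2 from rfl, show ((3 : Fin 4) : ℕ) = 3 from rfl] at *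
  rw [f1, f2, f3, f4, f5, f6, g1, g2, g3, g4, g5, g6]
  ring

end Dot

end SpinLef

namespace SpinLef

section Entry

/-- The inverse factorials as residues. -/
def eps (t : ℕ) : ZMod 103 := (invFact.getD t 0 : ℕ)

theorem eps_mul (t : ℕ) (ht : t < 21) : eps t * (t.factorial : ZMod 103) = 1 := by
  have : ∀ t < 21, (invFact.getD t 0) * t.factorial % 103 = 1 := by decide +kernel
  have h := this t ht
  rw [eps, ← Nat.cast_mul, ← Nat.cast_one, ZMod.natCast_eq_natCast_iff]
  exact h

/-- The matrix entries of `moment_eq`. -/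
def seqG (r c m : ℕ) : MvPolynomial (Fin 2) (ZMod 103) :=
  ∑ t ∈ range 21, C (eps t * (c : ZMod 103) ^ t) * hs r (ZMod 103) (t + m)

theorem natCast_103 (r : ℕ) : (103 : MvPolynomial (Fin 2) (ZMod 103) ⧸ J r) = 0 := by
  have : algebraMap (ZMod 103) (MvPolynomial (Fin 2) (ZMod 103) ⧸ J r) (103 : ℕ) = 0 := by
    rw [ZMod.natCast_self, map_zero]
  rwa [map_natCast] at this

theorem val_seqG (r c : ℕ) (L : List C8)
    (hL : ∀ i < 24 + 21, (get L i).val (pr r (X 0)) (pr r (X 1)) = pr r (hs r (ZMod 103) i))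
    (m : ℕ) (hm : m < 24) :
    (get (glist c invFact 24 L) m).val (pr r (X 0)) (pr r (X 1)) = pr r (seqG r c m) := by
  rw [val_glist (natCast_103 r) c invFact 24 L (fun i => pr r (hs r (ZMod 103) i)) hL m hm, seqG,
    map_sum]
  refine Finset.sum_congr rfl fun t _ => ?_
  rw [map_mul, ← algebraMap_eq, AlgHom.commutes, map_mul, map_pow, eps, map_natCast, map_natCast,
    add_comm m t]
  ring

theorem pr_useq (r m μ : ℕ) : pr r (useq (X 0) (X 1) (μ : MvPolynomial (Fin 2) (ZMod 103)) m) =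
    useq (pr r (X 0)) (pr r (X 1)) (μ : MvPolynomial (Fin 2) (ZMod 103) ⧸ J r) m := by
  rw [← map_natCast (pr r) μ]
  exact useq_map (pr r).toRingHom _ _ _ _

theorem pr_z3 : pr 3 (X 1) ^ 2 = (0 : ℕ) * pr 3 (X 0) ^ 6 := pr_z 3

theorem pr_z4 : pr 4 (X 1) ^ 2 = (8 : ℕ) * pr 4 (X 0) ^ 6 := by
  have := pr_z 4
  rwa [show 8 * (4 - 3) = 8 from rfl] at this

theorem val_hl4 (i : ℕ) (hi : i < 24 + 21) :
    (get hl4 i).val (pr 3 (X 0)) (pr 3 (X 1)) = pr 3 (hs 3 (ZMod 103) i) := by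
  have := val_hlist (natCast_103 3) 0 0 (pr_w 3) pr_z3 50 0 C8.zero C8.zero C8.zero
    ⟨1, 0, 0, 0, 0, 0, 0, 0⟩ C8.val_zero C8.val_zero C8.val_zero (by simp [C8.val, useq]) i
    (by omega)
  rw [hl4, this, hs, if_neg (by omega), pr_useq, zero_add]
  rfl

theorem get_cons_succ (x : C8) (L : List C8) (i : ℕ) : get (x :: L) (i + 1) = get L i := rfl

theorem val_hl5 (i : ℕ) (hi : i < 24 + 21) :
    (get hl5 i).val (pr 4 (X 0)) (pr 4 (X 1)) = pr 4 (hs 4 (ZMod 103) i) := by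
  cases i with
  | zero =>
    rw [hs, if_pos (by omega), map_zero]
    exact C8.val_zero
  | succ i =>
    have := val_hlist (natCast_103 4) 8 2 (pr_w 4) pr_z4 50 0 C8.zero C8.zero C8.zero
      ⟨1, 0, 0, 0, 0, 0, 0, 0⟩ C8.val_zero C8.val_zero C8.val_zero (by simp [C8.val, useq]) i
      (by omega)
    rw [zero_add] at this
    rw [hs, if_neg (by omega), pr_useq, show i + 1 - (4 - 3) = i by omega,
      show 2 * (4 - 3) = 2 from rfl, hl5, get_cons_succ, this]

/-- The dot products of the tables for `n = 5` compute the determinants of `moment_eq`. -/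
theorem dot5 (a : Fin 4 → ℕ) (h0 : a 0 ≤ 2) (h1 : a 1 ≤ 10) (h2 : a 2 ≤ 18) (h3 : a 3 ≤ 20) :
    (dot (ulist 8 (glist 2 invFact 24 hl5) (glist 3 invFact 24 hl5) (a 0) (a 1))
      (vlist 8 70 14 70 2 (glist 4 invFact 24 hl5) (glist 5 invFact 24 hl5) (a 2) (a 3)) :
        ZMod 103) =
      lam 4 _ (expw eps * Matrix.det (Matrix.of fun j i : Fin 4 => seqG 4 (i + 2) (a i + j))) := by
  obtain ⟨ℓ, hℓ⟩ := exists_form (r := 4) (Or.inr rfl) (expw eps)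
  have hz : ∀ k, ℓ (pr 4 (X 1) * pr 4 (X 0) ^ k) =
      if k ≤ 7 then eps (7 - k) * 2 ^ (7 - k) else 0 := fun k => by
    rw [← map_pow, ← map_mul, hℓ, lam_expw_pow_mul 4 (by norm_num)]
  have hw : ∀ k, ℓ (pr 4 (X 0) ^ k) = 0 := fun k => by
    rw [← map_pow, hℓ, lam_expw_pow]
  have hg : ∀ (c k : ℕ) (j : Fin 4), k ≤ 20 →
      (get (glist c invFact 24 hl5) (k + j)).val (pr 4 (X 0)) (pr 4 (X 1)) =
        pr 4 (seqG 4 c (k + j)) := fun c k j hk => val_seqG 4 c hl5 val_hl5 _ (by omega)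
  rw [dot_det (natCast_103 4) (pr_w 4) pr_z4 ℓ
    (by simpa using (hz 0).trans (b := ((70 : ℕ) : ZMod 103)) (by decide +kernel))
    ((hz 2).trans (by decide +kernel)) ((hz 4).trans (by decide +kernel))
    ((hz 6).trans (by decide +kernel)) (by rw [← hw 0, pow_zero]) (hw 2) (hw 4) (hw 6) _ _ _ _ a
    (Matrix.of fun i j : Fin 4 => pr 4 (seqG 4 (i + 2) (a i + j)))
    (fun j => hg 2 _ j (by omega)) (fun j => hg 3 _ j (by omega))
    (fun j => hg 4 _ j (by omega)) (fun j => hg 5 _ j (by omega))]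
  rw [← hℓ, ← Matrix.det_transpose, AlgHom.map_det]
  rfl

/-- The dot products of the tables for `n = 4` compute the determinants of `moment_eq`. -/
theorem dot4 (a : Fin 4 → ℕ) (h0 : a 0 ≤ 2) (h1 : a 1 ≤ 10) (h2 : a 2 ≤ 18) (h3 : a 3 = 0) :
    (dot (ulist 0 (glist 2 invFact 24 hl4) (glist 3 invFact 24 hl4) (a 0) (a 1))
      (vlist 0 70 2 0 0 (glist 4 invFact 24 hl4) padL (a 2) (a 3)) : ZMod 103) =
      lam 3 _ (expw eps *
        Matrix.det (Matrix.of fun j i : Fin 3 => seqG 3 (i + 2) (a i.castSucc + j))) := by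
  obtain ⟨ℓ, hℓ⟩ := exists_form (r := 3) (Or.inl rfl) (expw eps)
  have hz : ∀ k, ℓ (pr 3 (X 1) * pr 3 (X 0) ^ k) =
      if k ≤ 3 then eps (3 - k) * 2 ^ (3 - k) else 0 := fun k => by
    rw [← map_pow, ← map_mul, hℓ, lam_expw_pow_mul 3 (by norm_num)]
  have hw : ∀ k, ℓ (pr 3 (X 0) ^ k) = 0 := fun k => by
    rw [← map_pow, hℓ, lam_expw_pow]
  have hg : ∀ (c k : ℕ) (j : Fin 4), k ≤ 20 →
      (get (glist c invFact 24 hl4) (k + j)).val (pr 3 (X 0)) (pr 3 (X 1)) =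
        pr 3 (seqG 3 c (k + j)) := fun c k j hk => val_seqG 3 c hl4 val_hl4 _ (by omega)
  set M : Matrix (Fin 4) (Fin 4) (MvPolynomial (Fin 2) (ZMod 103)) :=
    Matrix.of ![fun j => seqG 3 2 (a 0 + j), fun j => seqG 3 3 (a 1 + j),
      fun j => seqG 3 4 (a 2 + j), ![0, 0, 0, 1]] with hM
  have hpad : ∀ j : Fin 4, (get padL (a 3 + j)).val (pr 3 (X 0)) (pr 3 (X 1)) = pr 3 (M 3 j) := by
    intro j
    rw [h3, zero_add]
    fin_cases j <;> simp [get, padL, M, C8.val, C8.zero]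
  rw [dot_det (natCast_103 3) (pr_w 3) pr_z3 ℓ
    (by simpa using (hz 0).trans (b := ((70 : ℕ) : ZMod 103)) (by decide +kernel))
    ((hz 2).trans (by decide +kernel)) ((hz 4).trans (by decide +kernel))
    ((hz 6).trans (by decide +kernel)) (by rw [← hw 0, pow_zero]) (hw 2) (hw 4) (hw 6) _ _ _ _ a
    (M.map (pr 3)) (fun j => hg 2 _ j (by omega)) (fun j => hg 3 _ j (by omega))
    (fun j => hg 4 _ j (by omega)) hpad]
  have hdet : M.det =
      Matrix.det (Matrix.of fun j i : Fin 3 => seqG 3 (i + 2) (a i.castSucc + j)) := by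
    rw [det_four, Matrix.det_fin_three]
    simp [M]
    ring
  rw [← hdet, ← hℓ, AlgHom.map_det]
  rfl

end Entry

end SpinLef

/-! ### Nondegeneracy of the Gram matrices -/

namespace SpinLef

section Gram

theorem code_add (a b : Fin 4 → ℕ) : code (a + b) = code a + code b := by
  simp only [code, Pi.add_apply]
  ring

theorem dig_facts (k : ℕ) (hk : k < 21) : (dig 24 facts k : ZMod 103) = k.factorial := by
  have h : ∀ i < 21, ((List.range 21).map fun k => k.factorial % 103).getD i 0 =
      i.factorial % 103 := by decide +kernel
  rw [facts, dig_packL 24 _ _ k (by simpa using hk), h k hk, C8.cast_mod rfl]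
  intro v hv
  obtain ⟨i, -, rfl⟩ := List.mem_map.1 hv
  exact (Nat.mod_lt _ (by norm_num)).trans (by norm_num)

theorem lam_det_eq {r : ℕ} (hr : r = 3 ∨ r = 4) (k : ℕ) (α : Fin r → ℕ)
    (hk : k + ∑ i, α i = r * (r + 1)) :
    (lam r _ (expw eps * Matrix.det (Matrix.of fun j i : Fin r => seqG r (i + 2) (α i + j))) *
      (k.factorial : ZMod 103)) = moment (ZMod 103) k α := by
  rw [moment_eq hr eps eps_mul k α hk, mul_comm]
  simp only [expw, seqG, add_assoc]

theorem entry5 (a : Fin 4 → ℕ) (h0 : a 0 ≤ 2) (h1 : a 1 ≤ 10) (h2 : a 2 ≤ 18) (h3 : a 3 ≤ 20)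
    (hs : ∑ i, a i ≤ 20) :
    (entry 20 (tab (Ulst 8 (glist 2 invFact 24 hl5) (glist 3 invFact 24 hl5))
      (Vlst 8 70 14 70 2 (glist 4 invFact 24 hl5) (glist 5 invFact 24 hl5))) facts (code a) :
        ZMod 103) = moment (ZMod 103) (20 - ∑ i, a i) a := by
  have hd : a 0 + a 1 + a 2 + a 3 = ∑ i, a i := by rw [Fin.sum_univ_four]
  rw [code, entry_eq _ _ _ _ _ _ _ _ _ _ _ _ _ _ _ _ h0 h1 h2 h3, hd, dig_facts _ (by omega),
    dot5 a h0 h1 h2 h3]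
  exact lam_det_eq (Or.inr rfl) _ a (by omega)

theorem entry4 (a : Fin 4 → ℕ) (h0 : a 0 ≤ 2) (h1 : a 1 ≤ 10) (h2 : a 2 ≤ 18) (h3 : a 3 = 0)
    (hs : ∑ i : Fin 3, a i.castSucc ≤ 12) :
    (entry 12 (tab (Ulst 0 (glist 2 invFact 24 hl4) (glist 3 invFact 24 hl4))
      (Vlst 0 70 2 0 0 (glist 4 invFact 24 hl4) padL)) facts (code a) : ZMod 103) =
      moment (ZMod 103) (12 - ∑ i : Fin 3, a i.castSucc) fun i => a i.castSucc := by
  have hd : a 0 + a 1 + a 2 + a 3 = ∑ i : Fin 3, a i.castSucc := by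
    rw [Fin.sum_univ_three, h3]; rfl
  rw [code, entry_eq _ _ _ _ _ _ _ _ _ _ _ _ _ _ _ _ h0 h1 h2 (h3.trans_le (by norm_num)), hd,
    dig_facts _ (by omega), dot4 a h0 h1 h2 h3]
  exact lam_det_eq (Or.inl rfl) _ (fun i => a i.castSucc) (by omega)

theorem mem_okCode {b : ℕ} {B : List ℕ} (h : B.all (okCode b) = true) (i : ℕ) (hi : i < B.length) :
    B.getD i 0 = code (expo (B.getD i 0)) ∧ expo (B.getD i 0) 0 ≤ 1 ∧
      expo (B.getD i 0) 1 ≤ 5 ∧ expo (B.getD i 0) 2 ≤ 9 ∧ expo (B.getD i 0) 3 ≤ b := by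
  have := List.all_eq_true.1 h (B.getD i 0)
    (by rw [List.getD_eq_getElem _ _ hi]; exact List.getElem_mem _)
  simpa [okCode, and_assoc] using this

/-- A square integer matrix that is invertible modulo a prime is invertible over `ℝ`. -/
theorem real_inj {m : ℕ} (a : Matrix (Fin m) (Fin m) ℤ)
    (h : ∀ x : Fin m → ZMod 103, (∀ i, ∑ j, (a i j : ZMod 103) * x j = 0) → x = 0)
    (x : Fin m → ℝ) (hx : ∀ i, ∑ j, (a i j : ℝ) * x j = 0) : x = 0 := by
  have h1 : ((Int.castRingHom (ZMod 103)).mapMatrix a).det ≠ 0 := by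
    intro hd
    obtain ⟨v, hv, hv'⟩ := Matrix.exists_mulVec_eq_zero_iff.2 hd
    exact hv (h v fun i => by simpa [Matrix.mulVec, dotProduct] using congrFun hv' i)
  rw [← RingHom.map_det] at h1
  have h2 : a.det ≠ 0 := fun h0 => h1 (by rw [h0, map_zero])
  have h3 : ((Int.castRingHom ℝ).mapMatrix a).det ≠ 0 := by
    rw [← RingHom.map_det]
    simpa using h2
  by_contra hne
  refine h3 (Matrix.exists_mulVec_eq_zero_iff.1 ⟨x, hne, ?_⟩)
  ext i
  simpa [Matrix.mulVec, dotProduct] using hx i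

theorem gram_nondeg {r N : ℕ} (ent : ℕ → ℕ) (hent : ∀ c, ent c < 103) (B : List ℕ)
    (hB : B.length < 1000) (h : run ent B.length B B 0 [] = true) (β : ℕ → Fin r → ℕ)
    (hβ : ∀ i < B.length, ∀ j < B.length, ∑ k, (β i + β j) k ≤ N →
      (ent (B.getD i 0 + B.getD j 0) : ZMod 103) =
        moment (ZMod 103) (N - ∑ k, (β i + β j) k) (β i + β j))
    (m : ℕ) (hm : m ≤ B.length) (hd : ∀ i < m, ∀ j < m, ∑ k, (β i + β j) k ≤ N)
    (x : Fin m → ℝ)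
    (hx : ∀ i : Fin m, ∑ j : Fin m, moment ℝ (N - ∑ k, (β i + β j) k) (β i + β j) * x j = 0) :
    x = 0 := by
  refine real_inj (fun i j : Fin m => moment ℤ (N - ∑ k, (β i + β j) k) (β i + β j)) ?_ x ?_
  · intro y hy
    have key := run_nondeg ent hent B hB h m hm (fun i => if hi : i < m then y ⟨i, hi⟩ else 0) ?_
    · ext i
      simpa using key i i.2
    · intro i hi
      refine Eq.trans ?_ (hy ⟨i, hi⟩)
      rw [← Fin.sum_univ_eq_sum_range
        (fun j => (ent (B.getD i 0 + B.getD j 0) : ZMod 103) * if hi : j < m then y ⟨j, hi⟩ else 0)]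
      refine Finset.sum_congr rfl fun j _ => ?_
      rw [dif_pos j.2, hβ i (by omega) j (by omega) (hd i hi j j.2),
        moment_map (Int.castRingHom (ZMod 103))]
      rfl
  · intro i
    rw [← hx i]
    refine Finset.sum_congr rfl fun j _ => ?_
    rw [moment_map (Int.castRingHom ℝ)]
    rfl

/-- The exponents of the test monomials for `n = 5`. -/
def beta5 (i : ℕ) : Fin 4 → ℕ := expo (codes5.getD i 0)

/-- The exponents of the test monomials for `n = 4`. -/
def beta4 (i : ℕ) : Fin 3 → ℕ := fun k => expo (codes4.getD i 0) k.castSucc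

theorem gram5 (m : ℕ) (hm : m ≤ codes5.length)
    (hd : ∀ i < m, ∀ j < m, ∑ k, (beta5 i + beta5 j) k ≤ 20) (x : Fin m → ℝ)
    (hx : ∀ i : Fin m, ∑ j : Fin m, moment ℝ (20 - ∑ k, (beta5 i + beta5 j) k)
      (beta5 i + beta5 j) * x j = 0) : x = 0 := by
  have h := check5
  rw [check, force_eq] at h
  refine gram_nondeg _ (entry_lt 20 _ _) codes5 (by decide +kernel) h beta5 ?_ m hm hd x hx
  intro i hi j hj hs
  obtain ⟨a1, a2, a3, a4, a5⟩ := mem_okCode codes5_ok i hi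
  obtain ⟨b1, b2, b3, b4, b5⟩ := mem_okCode codes5_ok j hj
  rw [a1, b1, ← code_add]
  refine entry5 _ ?_ ?_ ?_ ?_ hs
  all_goals rw [Pi.add_apply]; omega

theorem gram4 (m : ℕ) (hm : m ≤ codes4.length)
    (hd : ∀ i < m, ∀ j < m, ∑ k, (beta4 i + beta4 j) k ≤ 12) (x : Fin m → ℝ)
    (hx : ∀ i : Fin m, ∑ j : Fin m, moment ℝ (12 - ∑ k, (beta4 i + beta4 j) k)
      (beta4 i + beta4 j) * x j = 0) : x = 0 := by
  have h := check4
  rw [check, force_eq] at h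
  refine gram_nondeg _ (entry_lt 12 _ _) codes4 (by decide +kernel) h beta4 ?_ m hm hd x hx
  intro i hi j hj hs
  obtain ⟨a1, a2, a3, a4, a5⟩ := mem_okCode codes4_ok i hi
  obtain ⟨b1, b2, b3, b4, b5⟩ := mem_okCode codes4_ok j hj
  rw [a1, b1, ← code_add]
  refine entry4 (expo (codes4.getD i 0) + expo (codes4.getD j 0)) ?_ ?_ ?_ ?_ hs
  all_goals rw [Pi.add_apply]; omega

end Gram

end SpinLef

/-! ### Adjoining elements with monic equations -/

namespace SpinLef

section Tower

variable {R : Type*} [CommRing R] [Algebra ℝ R]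

/-- A multiplicative family of finite-dimensional subspaces, with bounds `D e` for the
dimensions. -/
structure Tower (L : ℕ → Submodule ℝ R) (D : ℕ → ℕ) : Prop where
  one : (1 : R) ∈ L 0
  mul : ∀ {a b x y}, x ∈ L a → y ∈ L b → x * y ∈ L (a + b)
  fin : ∀ e, Module.Finite ℝ (L e)
  rank : ∀ e, Module.finrank ℝ (L e) ≤ D e

/-- The elements `∑_{j < k} g ^ j * xⱼ` with `xⱼ` in `L` of degree `e - j * w`. -/
def adj (L : ℕ → Submodule ℝ R) (g : R) (w k e : ℕ) : Submodule ℝ R :=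
  Nat.rec ⊥ (fun j S => S ⊔
    if j * w ≤ e then (L (e - j * w)).map (LinearMap.mulLeft ℝ (g ^ j)) else ⊥) k

/-- The dimension bounds belonging to `adj`. -/
def adjD (D : ℕ → ℕ) (w k e : ℕ) : ℕ :=
  ∑ j ∈ range k, if j * w ≤ e then D (e - j * w) else 0

theorem adj_succ (L : ℕ → Submodule ℝ R) (g : R) (w k e : ℕ) :
    adj L g w (k + 1) e = adj L g w k e ⊔
      if k * w ≤ e then (L (e - k * w)).map (LinearMap.mulLeft ℝ (g ^ k)) else ⊥ := rfl

theorem mem_adj {L : ℕ → Submodule ℝ R} (g : R) (w : ℕ) {k j e : ℕ} (hj : j < k) {x : R}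
    (hx : x ∈ L e) : g ^ j * x ∈ adj L g w k (e + j * w) := by
  induction k with
  | zero => omega
  | succ k ih =>
    rw [adj_succ]
    rcases Nat.lt_succ_iff_lt_or_eq.1 hj with h | rfl
    · exact Submodule.mem_sup_left (ih h)
    · refine Submodule.mem_sup_right ?_
      rw [if_pos (Nat.le_add_left _ _), Nat.add_sub_cancel]
      exact ⟨x, hx, rfl⟩

theorem adj_induction {L : ℕ → Submodule ℝ R} {g : R} {w k e : ℕ} {P : R → Prop} (h0 : P 0)
    (ha : ∀ x y, P x → P y → P (x + y))
    (h : ∀ j < k, ∀ e', e' + j * w = e → ∀ x ∈ L e', P (g ^ j * x)) (x : R)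
    (hx : x ∈ adj L g w k e) : P x := by
  induction k generalizing x with
  | zero =>
    rw [(Submodule.mem_bot ℝ).1 hx]
    exact h0
  | succ k ih =>
    rw [adj_succ] at hx
    obtain ⟨y, hy, z, hz, rfl⟩ := Submodule.mem_sup.1 hx
    refine ha _ _ (ih (fun j hj => h j (by omega)) y hy) ?_
    split_ifs at hz with hk
    · obtain ⟨u, hu, rfl⟩ := hz
      exact h k (by omega) _ (by omega) u hu
    · rw [(Submodule.mem_bot ℝ).1 hz]
      exact h0

theorem adj_finite {L : ℕ → Submodule ℝ R} (hL : ∀ e, Module.Finite ℝ (L e)) (g : R) (w k e : ℕ) :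
    Module.Finite ℝ (adj L g w k e) := by
  induction k with
  | zero => exact inferInstanceAs (Module.Finite ℝ (⊥ : Submodule ℝ R))
  | succ k ih =>
    rw [adj_succ]
    by_cases h : k * w ≤ e
    · rw [if_pos h]
      infer_instance
    · rw [if_neg h, sup_bot_eq]
      exact ih

theorem adj_rank {L : ℕ → Submodule ℝ R} {D : ℕ → ℕ} (hL : ∀ e, Module.Finite ℝ (L e))
    (hD : ∀ e, Module.finrank ℝ (L e) ≤ D e) (g : R) (w k e : ℕ) :
    Module.finrank ℝ (adj L g w k e) ≤ adjD D w k e := by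
  induction k with
  | zero => exact (finrank_bot ℝ R).le
  | succ k ih =>
    have e1 : adjD D w (k + 1) e = adjD D w k e + if k * w ≤ e then D (e - k * w) else 0 :=
      Finset.sum_range_succ _ _
    have := adj_finite hL g w k e
    rw [adj_succ, e1]
    by_cases h : k * w ≤ e
    · rw [if_pos h, if_pos h]
      exact (Submodule.finrank_add_le_finrank_add_finrank _ _).trans
        (add_le_add ih ((Submodule.finrank_map_le _ _).trans (hD _)))
    · rw [if_neg h, if_neg h, sup_bot_eq]
      exact ih

/-- If `g` satisfies a monic homogeneous equation of degree `k` over `L`, then the sums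
`∑_{j < k} g ^ j * xⱼ` are closed under multiplication. -/
theorem Tower.adj {L : ℕ → Submodule ℝ R} {D : ℕ → ℕ} (hL : Tower L D) (g : R) (w k : ℕ)
    (hk : 0 < k) (c : ℕ → R) (hc : ∀ j < k, c j ∈ L ((k - j) * w))
    (hg : g ^ k = ∑ j ∈ range k, g ^ j * c j) : Tower (adj L g w k) (adjD D w k) := by
  have hpow : ∀ m a x, x ∈ L a → g ^ m * x ∈ SpinLef.adj L g w k (a + m * w) := by
    intro m
    induction m using Nat.strong_induction_on with
    | _ m ih =>
      intro a x hx
      rcases lt_or_ge m k with h | h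
      · exact mem_adj g w h hx
      · obtain ⟨m, rfl⟩ := Nat.exists_eq_add_of_le' h
        have e : g ^ (m + k) * x = ∑ j ∈ range k, g ^ (m + j) * (c j * x) := by
          rw [pow_add, hg, Finset.mul_sum, Finset.sum_mul]
          exact Finset.sum_congr rfl fun j _ => by ring
        rw [e]
        refine Submodule.sum_mem _ fun j hj => ?_
        have hj := Finset.mem_range.1 hj
        have := ih (m + j) (by omega) _ _ (hL.mul (hc j hj) hx)
        rwa [show (k - j) * w + a + (m + j) * w = a + (m + k) * w by
          obtain ⟨i, rfl⟩ := Nat.exists_eq_add_of_le hj.le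
          rw [Nat.add_sub_cancel_left]
          ring] at this
  refine ⟨?_, ?_, ?_, ?_⟩
  · simpa using mem_adj g w hk hL.one
  · intro a b x y hx hy
    refine adj_induction (P := fun x => x * y ∈ SpinLef.adj L g w k (a + b)) (by simp)
      (fun u v hu hv => by rw [add_mul]; exact Submodule.add_mem _ hu hv) ?_ x hx
    intro i _ a' ha u hu
    refine adj_induction (P := fun y => g ^ i * u * y ∈ SpinLef.adj L g w k (a + b)) (by simp)
      (fun u v hu hv => by rw [mul_add]; exact Submodule.add_mem _ hu hv) ?_ y hy
    intro j _ b' hb v hv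
    have := hpow (i + j) _ _ (hL.mul hu hv)
    rwa [show a' + b' + (i + j) * w = a + b by rw [← ha, ← hb]; ring,
      show g ^ (i + j) * (u * v) = g ^ i * u * (g ^ j * v) by ring] at this
  · exact adj_finite hL.fin g w k
  · exact adj_rank hL.fin hL.rank g w k

theorem le_adj {L : ℕ → Submodule ℝ R} {g : R} {w k : ℕ} (hk : 0 < k) {e : ℕ} {x : R}
    (hx : x ∈ L e) : x ∈ adj L g w k e := by
  simpa using mem_adj g w hk hx

theorem Tower.gen_mem {L : ℕ → Submodule ℝ R} {D : ℕ → ℕ} (hL : Tower L D) {g : R} {w k : ℕ}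
    (hk : 1 < k) : g ∈ SpinLef.adj L g w k w := by
  simpa using mem_adj g w hk hL.one

theorem adjD_eq_zero {D : ℕ → ℕ} {M : ℕ} (hD : ∀ e > M, D e = 0) (w k : ℕ) :
    ∀ e > M + (k - 1) * w, adjD D w k e = 0 := by
  intro e he
  refine Finset.sum_eq_zero fun j hj => ?_
  have : j * w ≤ (k - 1) * w := Nat.mul_le_mul_right _ (by have := Finset.mem_range.1 hj; omega)
  rw [if_pos (by omega), hD _ (by omega)]

/-- The constants, in degree zero. -/
def baseL (R : Type*) [CommRing R] [Algebra ℝ R] (e : ℕ) : Submodule ℝ R :=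
  if e = 0 then Submodule.span ℝ {1} else ⊥

/-- The dimension bounds for the constants. -/
def baseD (e : ℕ) : ℕ := if e = 0 then 1 else 0

theorem tower_base : Tower (baseL R) baseD := by
  have h0 : baseL R 0 = Submodule.span ℝ {1} := if_pos rfl
  refine ⟨?_, ?_, ?_, ?_⟩
  · rw [h0]
    exact Submodule.mem_span_singleton_self 1
  · intro a b x y hx hy
    rw [baseL] at hx hy
    split_ifs at hx hy with ha hb hb
    · subst ha hb
      rw [h0]
      obtain ⟨c, rfl⟩ := Submodule.mem_span_singleton.1 hx
      obtain ⟨d, rfl⟩ := Submodule.mem_span_singleton.1 hy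
      exact Submodule.mem_span_singleton.2 ⟨c * d, by simp [mul_smul, smul_comm c d]⟩
    all_goals simp_all
  · intro e
    by_cases h : e = 0
    · rw [baseL, if_pos h]
      infer_instance
    · rw [baseL, if_neg h]
      infer_instance
  · intro e
    by_cases h : e = 0
    · rw [baseL, baseD, if_pos h, if_pos h]
      simpa using finrank_span_le_card (R := ℝ) ({1} : Set R)
    · rw [baseL, baseD, if_neg h, if_neg h]
      exact (finrank_bot ℝ R).le

theorem Tower.pow {L : ℕ → Submodule ℝ R} {D : ℕ → ℕ} (hL : Tower L D) {x : R} {a : ℕ}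
    (hx : x ∈ L a) (m : ℕ) : x ^ m ∈ L (m * a) := by
  induction m with
  | zero => simpa using hL.one
  | succ m ih =>
    rw [pow_succ, Nat.succ_mul]
    exact hL.mul ih hx

theorem Tower.prod {L : ℕ → Submodule ℝ R} {D : ℕ → ℕ} (hL : Tower L D) {ι : Type*} (s : Finset ι)
    (x : ι → R) (a : ι → ℕ) (hx : ∀ i, x i ∈ L (a i)) : ∏ i ∈ s, x i ∈ L (∑ i ∈ s, a i) := by
  classical
  induction s using Finset.induction_on with
  | empty => simpa using hL.one
  | insert i s hi ih =>
    rw [Finset.prod_insert hi, Finset.sum_insert hi]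
    exact hL.mul (hx i) ih

/-- A tower containing the variables in degree one contains the graded pieces. -/
theorem gradedPiece_le {n : ℕ} (I : Ideal (MvPolynomial (Fin n) ℝ))
    {L : ℕ → Submodule ℝ (MvPolynomial (Fin n) ℝ ⧸ I)} {D : ℕ → ℕ} (hL : Tower L D)
    (hX : ∀ i, Ideal.Quotient.mk I (X i) ∈ L 1) (e : ℕ) : gradedPiece I e ≤ L e := by
  rintro _ ⟨F, hF, rfl⟩
  change Ideal.Quotient.mkₐ ℝ I F ∈ L e
  have hF : F.IsHomogeneous e := hF
  rw [F.as_sum, map_sum]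
  refine Submodule.sum_mem _ fun m hm => ?_
  have hdeg := hF (MvPolynomial.mem_support_iff.1 hm)
  rw [monomial_eq, ← smul_eq_C_mul, map_smul, Finsupp.prod_fintype _ _ (by simp), map_prod]
  refine Submodule.smul_mem _ _ ?_
  have := hL.prod Finset.univ (fun i => Ideal.Quotient.mkₐ ℝ I (X i ^ m i)) (fun i => m i * 1)
    fun i => by
      rw [map_pow]
      exact hL.pow (hX i) _
  have hs : ∑ i, m i * 1 = e := by
    simpa [Finsupp.weight_apply, Finsupp.sum_fintype] using hdeg
  rwa [hs] at this

end Tower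

end SpinLef

/-! ### Upper bounds for the dimensions -/

namespace SpinLef

section Bounds

variable {R : Type*} [CommRing R] [Algebra ℝ R]

/-- The Hilbert function of `A` for `n = 5`: the coefficients of
`[8] (1 + t³) [5] [4] [3] [2]` with `[k] = 1 + t + ⋯ + t ^ (k - 1)`. -/
def hilb5 : ℕ → ℕ := adjD (adjD (adjD (adjD (adjD (adjD baseD 1 8) 3 2) 1 5) 1 4) 1 3) 1 2

/-- The Hilbert function of `A` for `n = 4`: the coefficients of `[4] (1 + t³) [4] [3] [2]` with
`[k] = 1 + t + ⋯ + t ^ (k - 1)`. -/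
def hilb4 : ℕ → ℕ := adjD (adjD (adjD (adjD (adjD baseD 1 4) 3 2) 1 4) 1 3) 1 2

theorem baseD_eq_zero : ∀ e > 0, baseD e = 0 := fun _ he => if_neg he.ne'

theorem hilb5_eq_zero (e : ℕ) (he : e > 20) : hilb5 e = 0 :=
  adjD_eq_zero (adjD_eq_zero (adjD_eq_zero (adjD_eq_zero (adjD_eq_zero
    (adjD_eq_zero baseD_eq_zero 1 8) 3 2) 1 5) 1 4) 1 3) 1 2 e he

theorem hilb4_eq_zero (e : ℕ) (he : e > 12) : hilb4 e = 0 :=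
  adjD_eq_zero (adjD_eq_zero (adjD_eq_zero (adjD_eq_zero
    (adjD_eq_zero baseD_eq_zero 1 4) 3 2) 1 4) 1 3) 1 2 e he

theorem Tower.mul2 {L : ℕ → Submodule ℝ R} {D : ℕ → ℕ} (hL : Tower L D) {x y : R} {i j k : ℕ}
    (hx : x ∈ L i) (hy : y ∈ L j) (h : i + j = k := by norm_num) : x * y ∈ L k :=
  h ▸ hL.mul hx hy

theorem Tower.pow1 {L : ℕ → Submodule ℝ R} {D : ℕ → ℕ} (hL : Tower L D) {x : R} (hx : x ∈ L 1)
    (m : ℕ) : x ^ m ∈ L m := by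
  simpa using hL.pow hx m

/-- Adjoining the element `x` of degree one with `x ^ k = 0` to the constants. -/
theorem tower_first (x : R) (k : ℕ) (hk : 1 < k) (hx : x ^ k = 0) :
    Tower (adj (baseL R) x 1 k) (adjD baseD 1 k) :=
  tower_base.adj x 1 k (by omega) (fun _ => 0) (fun _ _ => Submodule.zero_mem _) (by simpa using hx)

/-- The elements `x, e₃, y₁, y₂, y₃` satisfy successive monic equations of degrees
`4, 2, 4, 3, 2`. -/
theorem tower4 (x a b c e2 e3 : R) (h2 : e2 = a * b + a * c + b * c - (a + b + c) * (a + b + c))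
    (h3 : e3 = a * b * c - (a * b + a * c + b * c) * (a + b + c))
    (h4 : a * b * c * (a + b + c) = 0) (r1 : x ^ 2 + 2 * e2 = 0) (r2 : e2 ^ 2 = 0)
    (r3 : e3 ^ 2 = 0) :
    ∃ L : ℕ → Submodule ℝ R, Tower L hilb4 ∧ x ∈ L 1 ∧ a ∈ L 1 ∧ b ∈ L 1 ∧ c ∈ L 1 := by
  have hx4 : x ^ 4 = 0 := by linear_combination (x ^ 2 - 2 * e2) * r1 + 4 * r2
  have he2 : e2 = -((1 / 2 : ℝ) • x ^ 2) := by
    have : (2 : ℝ) • e2 = -x ^ 2 := by rw [ofNat_smul_eq_nsmul, nsmul_eq_mul]; linear_combination r1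
    rw [← smul_neg, ← neg_eq_iff_eq_neg.2 (neg_neg (x ^ 2)).symm, ← this, smul_smul]
    norm_num
  have T1 := tower_first x 4 (by norm_num) hx4
  have x1 : x ∈ adj (baseL R) x 1 4 1 := tower_base.gen_mem (by norm_num)
  have s1 : e2 ∈ adj (baseL R) x 1 4 2 := by
    rw [he2]
    exact neg_mem (Submodule.smul_mem _ _ (T1.pow x1 2))
  generalize adj (baseL R) x 1 4 = L1 at *
  have T2 := T1.adj e3 3 2 (by norm_num) (fun _ => 0) (fun _ _ => Submodule.zero_mem _)
    (by simpa using r3)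
  have z2 : e3 ∈ adj L1 e3 3 2 3 := T1.gen_mem (by norm_num)
  have x2 : x ∈ adj L1 e3 3 2 1 := le_adj (by norm_num) x1
  have s2 : e2 ∈ adj L1 e3 3 2 2 := le_adj (by norm_num) s1
  generalize adj L1 e3 3 2 = L2 at *
  have T3 := T2.adj a 1 4 (by norm_num) (fun j => [0, e3, -e2, 0].getD j 0)
    (by
      intro j hj
      interval_cases j
      exacts [Submodule.zero_mem _, z2, neg_mem s2, Submodule.zero_mem _])
    (by simp [Finset.sum_range_succ]; rw [h2, h3]; linear_combination h4)
  have z3 : e3 ∈ adj L2 a 1 4 3 := le_adj (by norm_num) z2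
  have x3 : x ∈ adj L2 a 1 4 1 := le_adj (by norm_num) x2
  have s3 : e2 ∈ adj L2 a 1 4 2 := le_adj (by norm_num) s2
  have a3 : a ∈ adj L2 a 1 4 1 := T2.gen_mem (by norm_num)
  generalize adj L2 a 1 4 = L3 at *
  have T4 := T3.adj b 1 3 (by norm_num) (fun j => [-a ^ 3 - e2 * a + e3, -a ^ 2 - e2, -a].getD j 0)
    (by
      intro j hj
      interval_cases j
      exacts [add_mem (sub_mem (neg_mem (T3.pow1 a3 3)) (T3.mul2 s3 a3)) z3,
        sub_mem (neg_mem (T3.pow1 a3 2)) s3, neg_mem a3])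
    (by simp [Finset.sum_range_succ]; rw [h2, h3]; ring)
  have x4 : x ∈ adj L3 b 1 3 1 := le_adj (by norm_num) x3
  have s4 : e2 ∈ adj L3 b 1 3 2 := le_adj (by norm_num) s3
  have a4 : a ∈ adj L3 b 1 3 1 := le_adj (by norm_num) a3
  have b4 : b ∈ adj L3 b 1 3 1 := T3.gen_mem (by norm_num)
  generalize adj L3 b 1 3 = L4 at *
  have T5 := T4.adj c 1 2 (by norm_num) (fun j => [-a ^ 2 - a * b - b ^ 2 - e2, -a - b].getD j 0)
    (by
      intro j hj
      interval_cases j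
      exacts [sub_mem (sub_mem (sub_mem (neg_mem (T4.pow1 a4 2)) (T4.mul2 a4 b4)) (T4.pow1 b4 2)) s4,
        sub_mem (neg_mem a4) b4])
    (by simp [Finset.sum_range_succ]; rw [h2]; ring)
  exact ⟨_, T5, le_adj (by norm_num) x4, le_adj (by norm_num) a4, le_adj (by norm_num) b4,
    T4.gen_mem (by norm_num)⟩

/-- The elements `x, e₃, y₁, y₂, y₃, y₄` satisfy successive monic equations of degrees
`8, 2, 5, 4, 3, 2`. -/
theorem tower5 (x a b c d e2 e3 e4 : R)
    (h2 : e2 = a * b + a * c + a * d + b * c + b * d + c * d - (a + b + c + d) * (a + b + c + d))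
    (h3 : e3 = a * b * c + a * b * d + a * c * d + b * c * d -
      (a * b + a * c + a * d + b * c + b * d + c * d) * (a + b + c + d))
    (h4 : e4 = a * b * c * d - (a * b * c + a * b * d + a * c * d + b * c * d) * (a + b + c + d))
    (h5 : a * b * c * d * (a + b + c + d) = 0) (r1 : x ^ 2 + 2 * e2 = 0)
    (r2 : e2 ^ 2 + 2 * e4 = 0) (r3 : e3 ^ 2 - 2 * e2 * e4 = 0) (r4 : e4 ^ 2 = 0) :
    ∃ L : ℕ → Submodule ℝ R, Tower L hilb5 ∧
      x ∈ L 1 ∧ a ∈ L 1 ∧ b ∈ L 1 ∧ c ∈ L 1 ∧ d ∈ L 1 := by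
  have half : ∀ u v : R, v + 2 * u = 0 → u = -((1 / 2 : ℝ) • v) := fun u v h => by
    have : (2 : ℝ) • u = -v := by rw [ofNat_smul_eq_nsmul, nsmul_eq_mul]; linear_combination h
    rw [← smul_neg, ← this, smul_smul]
    norm_num
  have he2 := half _ _ r1
  have he4 := half _ _ r2
  have hx8 : x ^ 8 = 0 := by
    linear_combination (x ^ 6 - 2 * e2 * x ^ 4 + 4 * e2 ^ 2 * x ^ 2 - 8 * e2 ^ 3) * r1 +
      16 * (e2 ^ 2 - 2 * e4) * r2 + 64 * r4
  have T1 := tower_first x 8 (by norm_num) hx8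
  have x1 : x ∈ adj (baseL R) x 1 8 1 := tower_base.gen_mem (by norm_num)
  have s1 : e2 ∈ adj (baseL R) x 1 8 2 := by
    rw [he2]
    exact neg_mem (Submodule.smul_mem _ _ (T1.pow x1 2))
  have t1 : e4 ∈ adj (baseL R) x 1 8 4 := by
    rw [he4]
    exact neg_mem (Submodule.smul_mem _ _ (T1.pow s1 2))
  generalize adj (baseL R) x 1 8 = L1 at *
  have T2 := T1.adj e3 3 2 (by norm_num) (fun j => [2 * (e2 * e4), 0].getD j 0)
    (by
      intro j hj
      interval_cases j
      · have : e2 * e4 ∈ L1 6 := T1.mul2 s1 t1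
        exact (two_mul (e2 * e4)) ▸ add_mem this this
      · exact Submodule.zero_mem _)
    (by simp [Finset.sum_range_succ]; linear_combination r3)
  have z2 : e3 ∈ adj L1 e3 3 2 3 := T1.gen_mem (by norm_num)
  have x2 : x ∈ adj L1 e3 3 2 1 := le_adj (by norm_num) x1
  have s2 : e2 ∈ adj L1 e3 3 2 2 := le_adj (by norm_num) s1
  have t2 : e4 ∈ adj L1 e3 3 2 4 := le_adj (by norm_num) t1
  generalize adj L1 e3 3 2 = L2 at *
  have T3 := T2.adj a 1 5 (by norm_num) (fun j => [0, -e4, e3, -e2, 0].getD j 0)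
    (by
      intro j hj
      interval_cases j
      exacts [Submodule.zero_mem _, neg_mem t2, z2, neg_mem s2, Submodule.zero_mem _])
    (by simp [Finset.sum_range_succ]; rw [h2, h3, h4]; linear_combination -h5)
  have z3 : e3 ∈ adj L2 a 1 5 3 := le_adj (by norm_num) z2
  have x3 : x ∈ adj L2 a 1 5 1 := le_adj (by norm_num) x2
  have s3 : e2 ∈ adj L2 a 1 5 2 := le_adj (by norm_num) s2
  have t3 : e4 ∈ adj L2 a 1 5 4 := le_adj (by norm_num) t2
  have a3 : a ∈ adj L2 a 1 5 1 := T2.gen_mem (by norm_num)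
  generalize adj L2 a 1 5 = L3 at *
  have T4 := T3.adj b 1 4 (by norm_num)
    (fun j => [-a ^ 4 - e2 * a ^ 2 + e3 * a - e4, -a ^ 3 - e2 * a + e3, -a ^ 2 - e2, -a].getD j 0)
    (by
      intro j hj
      interval_cases j
      exacts [sub_mem (add_mem (sub_mem (neg_mem (T3.pow1 a3 4)) (T3.mul2 s3 (T3.pow1 a3 2)))
        (T3.mul2 z3 a3)) t3, add_mem (sub_mem (neg_mem (T3.pow1 a3 3)) (T3.mul2 s3 a3)) z3,
        sub_mem (neg_mem (T3.pow1 a3 2)) s3, neg_mem a3])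
    (by simp [Finset.sum_range_succ]; rw [h2, h3, h4]; ring)
  have z4 : e3 ∈ adj L3 b 1 4 3 := le_adj (by norm_num) z3
  have x4 : x ∈ adj L3 b 1 4 1 := le_adj (by norm_num) x3
  have s4 : e2 ∈ adj L3 b 1 4 2 := le_adj (by norm_num) s3
  have a4 : a ∈ adj L3 b 1 4 1 := le_adj (by norm_num) a3
  have b4 : b ∈ adj L3 b 1 4 1 := T3.gen_mem (by norm_num)
  generalize adj L3 b 1 4 = L4 at *
  have T5 := T4.adj c 1 3 (by norm_num)
    (fun j => [-a ^ 3 - a ^ 2 * b - a * b ^ 2 - b ^ 3 - e2 * (a + b) + e3,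
      -a ^ 2 - a * b - b ^ 2 - e2, -a - b].getD j 0)
    (by
      intro j hj
      interval_cases j
      exacts [add_mem (sub_mem (sub_mem (sub_mem (sub_mem (neg_mem (T4.pow1 a4 3))
        (T4.mul2 (T4.pow1 a4 2) b4)) (T4.mul2 a4 (T4.pow1 b4 2))) (T4.pow1 b4 3))
        (T4.mul2 s4 (add_mem a4 b4))) z4,
        sub_mem (sub_mem (sub_mem (neg_mem (T4.pow1 a4 2)) (T4.mul2 a4 b4)) (T4.pow1 b4 2)) s4,
        sub_mem (neg_mem a4) b4])
    (by simp [Finset.sum_range_succ]; rw [h2, h3]; ring)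
  have x5 : x ∈ adj L4 c 1 3 1 := le_adj (by norm_num) x4
  have s5 : e2 ∈ adj L4 c 1 3 2 := le_adj (by norm_num) s4
  have a5 : a ∈ adj L4 c 1 3 1 := le_adj (by norm_num) a4
  have b5 : b ∈ adj L4 c 1 3 1 := le_adj (by norm_num) b4
  have c5 : c ∈ adj L4 c 1 3 1 := T4.gen_mem (by norm_num)
  generalize adj L4 c 1 3 = L5 at *
  have T6 := T5.adj d 1 2 (by norm_num)
    (fun j => [-a ^ 2 - b ^ 2 - c ^ 2 - a * b - a * c - b * c - e2, -a - b - c].getD j 0)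
    (by
      intro j hj
      interval_cases j
      exacts [sub_mem (sub_mem (sub_mem (sub_mem (sub_mem (sub_mem (neg_mem (T5.pow1 a5 2))
        (T5.pow1 b5 2)) (T5.pow1 c5 2)) (T5.mul2 a5 b5)) (T5.mul2 a5 c5)) (T5.mul2 b5 c5)) s5,
        sub_mem (sub_mem (neg_mem a5) b5) c5])
    (by simp [Finset.sum_range_succ]; rw [h2]; ring)
  exact ⟨_, T6, le_adj (by norm_num) x5, le_adj (by norm_num) a5, le_adj (by norm_num) b5,
    le_adj (by norm_num) c5, T5.gen_mem (by norm_num)⟩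

end Bounds

end SpinLef

/-! ### The Hard Lefschetz property -/

namespace SpinLef

section Assembly

theorem om_homog (r : ℕ) : (om r ℝ).IsHomogeneous 1 :=
  IsHomogeneous.sum _ _ _ fun i _ => (isHomogeneous_X ℝ i).C_mul _

theorem om_eq (r : ℕ) : om r ℝ = omegaPoly (r + 1) := by
  simp [om, omegaPoly]

/-- The criterion: if the graded pieces have at most the dimensions `h`, and the Gram matrices of
the first `h d` test classes `ω ^ (d - |β|) * y ^ β` of degree `d` are nondegenerate, then `ω` is a
Hard Lefschetz element. -/
theorem lefschetz_of_gram {r N : ℕ} (I : Ideal (MvPolynomial (Fin (r + 1)) ℝ))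
    (hI : ∀ F ∈ I, phi r ℝ F = 0) (h : ℕ → ℕ)
    (hL : ∃ L : ℕ → Submodule ℝ (MvPolynomial (Fin (r + 1)) ℝ ⧸ I), Tower L h ∧
      ∀ i, Ideal.Quotient.mk I (X i) ∈ L 1) (h0 : ∀ e > N, h e = 0)
    (β : ℕ → Fin r → ℕ) (M : ℕ)
    (hd : ∀ d, 2 * d ≤ N → h (N - d) ≤ h d ∧ h d ≤ M ∧ ∀ i < h d, ∑ k, β i k ≤ d)
    (gram : ∀ m ≤ M, (∀ i < m, ∀ j < m, ∑ k, (β i + β j) k ≤ N) → ∀ x : Fin m → ℝ,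
      (∀ i : Fin m, ∑ j : Fin m, moment ℝ (N - ∑ k, (β i + β j) k) (β i + β j) * x j = 0) →
      x = 0) :
    IsHardLefschetzElement I (Ideal.Quotient.mk I (omegaPoly (r + 1))) N := by
  obtain ⟨L, T, hX⟩ := hL
  have hle := gradedPiece_le I T hX
  have hfin : ∀ e, Module.Finite ℝ (gradedPiece I e) := fun e => by
    have := T.fin e
    exact Submodule.finiteDimensional_of_le (hle e)
  have hrank : ∀ e, Module.finrank ℝ (gradedPiece I e) ≤ h e := fun e => by
    have := T.fin e
    exact (Submodule.finrank_mono (hle e)).trans (T.rank e)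
  rw [← om_eq]
  set ω := Ideal.Quotient.mk I (om r ℝ) with hω
  refine ⟨fun e he => ?_, fun d h2d => ?_⟩
  · have := hfin e
    rw [← Submodule.finrank_eq_zero (R := ℝ)]
    exact Nat.le_zero.1 ((hrank e).trans_eq (h0 e he))
  obtain ⟨hsym, hM, hdeg⟩ := hd d h2d
  have := hfin d
  have := hfin (N - d)
  set f := LinearMap.mulLeft ℝ (ω ^ (N - 2 * d)) with hf
  -- the test classes of degree `d`
  set V : Fin (h d) → MvPolynomial (Fin (r + 1)) ℝ := fun i =>
    om r ℝ ^ (d - ∑ k, β i k) * ∏ k : Fin r, X k.succ ^ β i k with hV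
  have hVh : ∀ i, (V i).IsHomogeneous d := fun i => by
    have h1 := (om_homog r).pow (d - ∑ k, β i k)
    have h2 := IsHomogeneous.prod Finset.univ (fun k : Fin r => (X k.succ : MvPolynomial _ ℝ) ^ β i k)
      (fun k => 1 * β i k) fun k _ => (isHomogeneous_X ℝ _).pow _
    have := h1.mul h2
    rwa [show 1 * (d - ∑ k, β i k) + ∑ k, 1 * β i k = d by
      have := hdeg i i.2
      simp only [one_mul]
      omega] at this
  have hVm : ∀ i, Ideal.Quotient.mk I (V i) ∈ gradedPiece I d := fun i => ⟨V i, hVh i, rfl⟩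
  have hmap : (gradedPiece I d).map f ≤ gradedPiece I (N - d) := by
    rintro _ ⟨_, ⟨F, hF, rfl⟩, rfl⟩
    refine ⟨om r ℝ ^ (N - 2 * d) * F, ?_, by simp [hf, hω]⟩
    have := ((om_homog r).pow (N - 2 * d)).mul (show F.IsHomogeneous d from hF)
    rwa [show 1 * (N - 2 * d) + d = N - d by omega] at this
  -- their images under multiplication are independent, by pairing with the test classes
  have hli : LinearIndependent ℝ fun i : Fin (h d) =>
      (⟨f (Ideal.Quotient.mk I (V i)), Submodule.mem_map_of_mem (hVm i)⟩ :
        (gradedPiece I d).map f) := by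
    rw [Fintype.linearIndependent_iff]
    intro x hx
    have hx' : ∑ j, x j • f (Ideal.Quotient.mk I (V j)) = 0 := by
      simpa using congrArg Subtype.val hx
    have hmem : ∑ j, C (x j) * (om r ℝ ^ (N - 2 * d) * V j) ∈ I := by
      rw [← Ideal.Quotient.eq_zero_iff_mem, ← hx', map_sum]
      refine Finset.sum_congr rfl fun j _ => ?_
      rw [← smul_eq_C_mul, ← Ideal.Quotient.mkₐ_eq_mk ℝ, map_smul]
      simp [hf, hω]
    refine congrFun (gram (h d) hM ?_ x fun i => ?_)
    · intro i hi j hj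
      have := hdeg i hi
      have := hdeg j hj
      simp only [Pi.add_apply, Finset.sum_add_distrib]
      omega
    · rw [← hI _ (I.mul_mem_left (V i) hmem), Finset.mul_sum, map_sum]
      refine Finset.sum_congr rfl fun j _ => ?_
      rw [← mul_left_comm, ← smul_eq_C_mul, map_smul, smul_eq_mul, mul_comm, moment]
      congr 2
      have hi := hdeg i i.2
      have hj := hdeg j j.2
      have hs : ∑ k, (β i + β j) k = ∑ k, β i k + ∑ k, β j k := by
        simp only [Pi.add_apply, Finset.sum_add_distrib]
      rw [hs, show N - (∑ k, β i k + ∑ k, β j k) =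
        (d - ∑ k, β i k) + ((N - 2 * d) + (d - ∑ k, β j k)) by omega]
      simp only [hV, Pi.add_apply, pow_add, Finset.prod_mul_distrib]
      ring
  have hcard : h d ≤ Module.finrank ℝ ((gradedPiece I d).map f) := by
    simpa using hli.fintype_card_le_finrank
  refine ⟨Submodule.eq_of_le_of_finrank_le hmap (((hrank _).trans hsym).trans hcard), ?_⟩
  -- the restriction of `f` has rank `h d`, so its kernel is trivial
  intro x hx h0x
  have hker := (f.domRestrict (gradedPiece I d)).finrank_range_add_finrank_ker
  rw [LinearMap.range_domRestrict] at hker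
  have hk : Module.finrank ℝ (f.domRestrict (gradedPiece I d)).ker = 0 := by
    have := hrank d
    omega
  have hmem : (⟨x, hx⟩ : gradedPiece I d) ∈ (f.domRestrict (gradedPiece I d)).ker := h0x
  rw [Submodule.finrank_eq_zero.1 hk, Submodule.mem_bot] at hmem
  exact congrArg Subtype.val hmem

theorem lefschetz4 : IsHardLefschetzElement (Ideal.span (Set.range (rel2 4)))
    (Ideal.Quotient.mk (Ideal.span (Set.range (rel2 4))) (omegaPoly 4)) 12 := by
  refine lefschetz_of_gram (r := 3) _ phi_eq_zero4 hilb4 ?_ hilb4_eq_zero beta4 codes4.length ?_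
    gram4
  · set I := Ideal.span (Set.range (rel2 4)) with hI
    have hz : ∀ j, Ideal.Quotient.mk I (rel2 4 j) = 0 := fun j =>
      Ideal.Quotient.eq_zero_iff_mem.2 (Ideal.subset_span ⟨j, rfl⟩)
    obtain ⟨r0, r1, r2, r3⟩ := rel4 (Ideal.Quotient.mk I) _ _ _ _ _ _ _ rfl rfl rfl rfl rfl rfl rfl
    rw [hz, eq_comm] at r0 r1 r2 r3
    have r3' := neg_eq_zero.1 (neg_eq_zero.1 r3)
    rw [neg_eq_zero, r3', neg_zero, mul_zero] at r1 r2
    rw [add_zero] at r1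
    rw [sub_zero] at r2
    obtain ⟨L, T, hx, ha, hb, hc⟩ := tower4 _ _ _ _ _ _ rfl rfl r3' r0 r1 r2
    exact ⟨L, T, fun i => by fin_cases i; exacts [hx, ha, hb, hc]⟩
  · have : ∀ d < 7, hilb4 (12 - d) ≤ hilb4 d ∧ hilb4 d ≤ codes4.length ∧
        ∀ i < hilb4 d, ∑ k, beta4 i k ≤ d := by decide +kernel
    exact fun d h => this d (by omega)

theorem lefschetz5 : IsHardLefschetzElement (Ideal.span (Set.range (rel2 5)))
    (Ideal.Quotient.mk (Ideal.span (Set.range (rel2 5))) (omegaPoly 5)) 20 := by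
  refine lefschetz_of_gram (r := 4) _ phi_eq_zero5 hilb5 ?_ hilb5_eq_zero beta5 codes5.length ?_
    gram5
  · set I := Ideal.span (Set.range (rel2 5)) with hI
    have hz : ∀ j, Ideal.Quotient.mk I (rel2 5 j) = 0 := fun j =>
      Ideal.Quotient.eq_zero_iff_mem.2 (Ideal.subset_span ⟨j, rfl⟩)
    obtain ⟨r0, r1, r2, r3, r4⟩ := rel5 (Ideal.Quotient.mk I) _ _ _ _ _ _ _ _ _ rfl rfl rfl rfl rfl
      rfl rfl rfl rfl
    rw [hz, eq_comm] at r0 r1 r2 r3 r4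
    have r4' := neg_eq_zero.1 (neg_eq_zero.1 r4)
    rw [neg_eq_zero] at r1 r2 r3
    rw [r4', neg_zero, mul_zero, sub_zero] at r3
    obtain ⟨L, T, hx, ha, hb, hc, hd⟩ := tower5 _ _ _ _ _ _ _ _ rfl rfl rfl r4' r0 r1 r2 r3
    exact ⟨L, T, fun i => by fin_cases i; exacts [hx, ha, hb, hc, hd]⟩
  · have : ∀ d < 11, hilb5 (20 - d) ≤ hilb5 d ∧ hilb5 d ≤ codes5.length ∧
        ∀ i < hilb5 d, ∑ k, beta5 i k ≤ d := by decide +kernel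
    exact fun d h => this d (by omega)

end Assembly

end SpinLef

/-- For `n ∈ {4,5}`, `ω = x_1 + 2x_2 + ⋯ + nx_n` is a Hard Lefschetz element of
`ℝ[x_1,…,x_n]/(f_1,…,f_n)` with socle degree `n² − n` (the cohomology of `Spin(2n)//S_1`). -/
theorem hard_lefschetz_Spin_even_S1 (n : ℕ) (hn : n = 4 ∨ n = 5) :
    IsHardLefschetzElement (Ideal.span (Set.range (rel2 n)))
      (Ideal.Quotient.mk (Ideal.span (Set.range (rel2 n))) (omegaPoly n)) (n ^ 2 - n) := by
  obtain rfl | rfl := hn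
  · exact SpinLef.lefschetz4
  · exact SpinLef.lefschetz5
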